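/- arXiv:0901.3995 — 4 statements merged into one kernel-verified Lean document; each statement's English description precedes it below -/
import Mathlib

section
/- Let n ∈ [3/2, 3), μ = 3/n, T > 0, and let φ : ℝ → ℝ be a continuous T-periodic function, not identically zero, whose zero set has Lebesgue measure zero. Let λ ∈ ℂ and let Y : ℝ → ℂ be T-periodic, of class C² with Y'' locally absolutely continuous, not identically zero, with ∫₀ᵀ |φ(s)|^{−n} |Y(s)|² ds < ∞, satisfying almost everywhere the linearised equation Y''' + 3(μ−1)Y'' + (3μ²−6μ+2)Y' + μ(μ−1)(μ−2)Y + (1−n)|φ(s)|^{−n} Y = λ Y. Then Re λ < 0. (Hence, if a periodic solution of the oscillatory-component equation persists for 3/2 ≤ n < 3, it is linearly stable and hyperbolic.) -/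
open MeasureTheory intervalIntegral

/-- The third derivative is interval integrable: otherwise, by the junk value of the integral,
the second derivative is constant outside an interval, hence everywhere by periodicity. -/
lemma third_deriv_intervalIntegrable {T : ℝ} (hT : 0 < T) {Z : ℝ → ℂ}
    (hZ : Function.Periodic Z T)
    (hAC : ∀ a b : ℝ, Z b - Z a = ∫ s in a..b, deriv Z s) (a b : ℝ) :
    IntervalIntegrable (deriv Z) volume a b := by
  wlog hab : a ≤ b generalizing a b
  · exact (this b a (le_of_not_ge hab)).symm
  by_contra hnot
  have key : ∀ x y, x ≤ a → b ≤ y → Z y = Z x := by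
    intro x y hx hy
    have h1 : ¬ IntervalIntegrable (deriv Z) volume x y := by
      intro h
      apply hnot
      refine h.mono_set ?_
      rw [Set.uIcc_of_le hab, Set.uIcc_of_le (hx.trans (hab.trans hy))]
      exact Set.Icc_subset_Icc hx hy
    have := hAC x y
    rw [intervalIntegral.integral_undef h1] at this
    exact sub_eq_zero.mp this
  have hconst : ∀ t, Z t = Z a := by
    intro t
    obtain ⟨k, hk⟩ := exists_nat_ge ((b - t) / T)
    have h2 : b ≤ t + k * T := by
      rw [div_le_iff₀ hT] at hk
      linarith
    have h3 : Z (t + k * T) = Z t := by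
      simpa using (hZ.nat_mul k) t
    rw [← h3]
    exact key a _ le_rfl h2
  have hfun : Z = fun _ => Z a := funext hconst
  apply hnot
  rw [hfun]
  simp

lemma periodic_deriv_aux {T : ℝ} {Z : ℝ → ℂ} (hZ : Function.Periodic Z T) :
    Function.Periodic (deriv Z) T := by
  intro x
  rw [← deriv_comp_add_const]
  congr 1
  exact funext hZ

lemma hasDerivAt_re_aux {Z : ℝ → ℂ} {z : ℂ} {t : ℝ} (h : HasDerivAt Z z t) :
    HasDerivAt (fun s => (Z s).re) z.re t :=
  Complex.reCLM.hasFDerivAt.comp_hasDerivAt t h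

lemma hasDerivAt_im_aux {Z : ℝ → ℂ} {z : ℂ} {t : ℝ} (h : HasDerivAt Z z t) :
    HasDerivAt (fun s => (Z s).im) z.im t :=
  Complex.imCLM.hasFDerivAt.comp_hasDerivAt t h

/-- The energy function whose derivative yields the key identity. -/
noncomputable def energyAux (A B : ℝ) (Y : ℝ → ℂ) (t : ℝ) : ℝ :=
  ((deriv (deriv Y) t).re * (Y t).re + (deriv (deriv Y) t).im * (Y t).im)
  + (-(((deriv Y t).re * (deriv Y t).re + (deriv Y t).im * (deriv Y t).im) / 2)
    + A * ((deriv Y t).re * (Y t).re + (deriv Y t).im * (Y t).im)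
    + B / 2 * ((Y t).re * (Y t).re + (Y t).im * (Y t).im))

lemma energyAux_hasDerivAt (A B : ℝ) {Y : ℝ → ℂ} {t : ℝ}
    (h0 : HasDerivAt Y (deriv Y t) t)
    (h1 : HasDerivAt (deriv Y) (deriv (deriv Y) t) t)
    (h2 : HasDerivAt (deriv (deriv Y)) (deriv (deriv (deriv Y)) t) t) :
    HasDerivAt (energyAux A B Y)
      (((deriv (deriv (deriv Y)) t).re + A * (deriv (deriv Y) t).re + B * (deriv Y t).re)
          * (Y t).re
        + ((deriv (deriv (deriv Y)) t).im + A * (deriv (deriv Y) t).im + B * (deriv Y t).im)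
          * (Y t).im
        + A * ((deriv Y t).re ^ 2 + (deriv Y t).im ^ 2)) t := by
  have r0 := hasDerivAt_re_aux h0
  have i0 := hasDerivAt_im_aux h0
  have r1 := hasDerivAt_re_aux h1
  have i1 := hasDerivAt_im_aux h1
  have r2 := hasDerivAt_re_aux h2
  have i2 := hasDerivAt_im_aux h2
  have := ((r2.mul r0).add (i2.mul i0)).add
    (((((r1.mul r1).add (i1.mul i1)).div_const 2).neg.add
      (((r1.mul r0).add (i1.mul i0)).const_mul A)).add
      (((r0.mul r0).add (i0.mul i0)).const_mul (B / 2)))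
  refine HasDerivAt.congr_deriv (f := energyAux A B Y) this ?_
  ring

lemma re_ac_aux {Z : ℝ → ℂ}
    (hAC : ∀ a b : ℝ, Z b - Z a = ∫ s in a..b, deriv Z s)
    (hI : ∀ a b, IntervalIntegrable (deriv Z) volume a b) (L : ℂ →L[ℝ] ℝ) (a b : ℝ) :
    AbsolutelyContinuousOnInterval (fun t => L (Z t)) a b := by
  have hLI : IntervalIntegrable (fun t => L (deriv Z t)) volume a b :=
    ⟨L.integrable_comp (hI a b).1, L.integrable_comp (hI a b).2⟩
  have h1 := hLI.absolutelyContinuousOnInterval_intervalIntegral (c := a) Set.left_mem_uIcc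
  have h2 : AbsolutelyContinuousOnInterval (fun _ : ℝ => L (Z a)) a b :=
    ContDiffOn.absolutelyContinuousOnInterval contDiffOn_const
  have h3 := h1.add h2
  refine Eq.mp (congrArg (fun f : ℝ → ℝ => AbsolutelyContinuousOnInterval f a b) ?_) h3
  funext t
  symm
  have : Z t = (∫ s in a..t, deriv Z s) + Z a := by rw [← hAC a t]; ring
  simp only [Pi.add_apply]
  rw [L.intervalIntegral_comp_comm (hI a t), ← map_add, ← this]

/-- Linear stability and hyperbolicity of periodic orbits of the
oscillatory-component equation for `n ∈ [3/2, 3)`: any periodic eigenfunction `Y`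
of the linearisation about a periodic `φ` with spectral parameter `λ` forces
`Re λ < 0`. -/
theorem periodic_orbit_linearisation_stable
    (n μ T : ℝ) (hn : n ∈ Set.Ico (3 / 2 : ℝ) 3) (hμ : μ = 3 / n) (hT : 0 < T)
    (φ : ℝ → ℝ) (hφc : Continuous φ) (hφper : Function.Periodic φ T)
    (hφne : ∃ s, φ s ≠ 0)
    (hφzero : volume {s : ℝ | φ s = 0} = 0)
    (lam : ℂ) (Y : ℝ → ℂ) (hYper : Function.Periodic Y T)
    (hYreg : ContDiff ℝ 2 Y)
    (hYAC : ∀ a b : ℝ, deriv (deriv Y) b - deriv (deriv Y) a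
      = ∫ s in a..b, deriv (deriv (deriv Y)) s)
    (hYne : ∃ s, Y s ≠ 0)
    (hint : IntegrableOn (fun s => |φ s| ^ (-n) * ‖Y s‖ ^ 2) (Set.Ioc 0 T))
    (heq : ∀ᵐ s : ℝ ∂volume,
      deriv (deriv (deriv Y)) s
        + (3 * (μ - 1) : ℝ) * deriv (deriv Y) s
        + ((3 * μ ^ 2 - 6 * μ + 2 : ℝ) : ℂ) * deriv Y s
        + ((μ * (μ - 1) * (μ - 2) : ℝ) : ℂ) * Y s
        + (((1 - n) * |φ s| ^ (-n) : ℝ) : ℂ) * Y s = lam * Y s) :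
    lam.re < 0 := by
  obtain ⟨hn1, hn2⟩ := hn
  have hμ1 : 1 < μ := by rw [hμ, lt_div_iff₀ (by linarith)]; linarith
  have hμ2 : μ ≤ 2 := by rw [hμ, div_le_iff₀ (by linarith)]; linarith
  have hper1 := periodic_deriv_aux hYper
  have hper2 := periodic_deriv_aux hper1
  have hI := third_deriv_intervalIntegrable hT hper2 hYAC
  have hY1 : ContDiff ℝ 1 (deriv Y) := by
    have : ContDiff ℝ (1 + 1) Y := by simpa [one_add_one_eq_two] using hYreg
    exact (contDiff_succ_iff_deriv.mp this).2.2
  have hY0 : ContDiff ℝ 1 Y := hYreg.of_le (by norm_num)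
  have hd0 : ∀ t, HasDerivAt Y (deriv Y t) t := fun t =>
    (hY0.differentiable (by norm_num) t).hasDerivAt
  have hd1 : ∀ t, HasDerivAt (deriv Y) (deriv (deriv Y) t) t := fun t =>
    (hY1.differentiable (by norm_num) t).hasDerivAt
  have hloc : LocallyIntegrable (deriv (deriv (deriv Y))) volume := by
    intro x
    refine ⟨Set.Ioc (x - 1) (x + 1), Ioc_mem_nhds (by linarith) (by linarith), ?_⟩
    exact (intervalIntegrable_iff_integrableOn_Ioc_of_le (by linarith)).mp (hI _ _)
  have hd2 : ∀ᵐ t, HasDerivAt (deriv (deriv Y)) (deriv (deriv (deriv Y)) t) t := by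
    filter_upwards [_root_.LocallyIntegrable.ae_hasDerivAt_integral hloc] with t ht
    have := (ht 0).add_const (deriv (deriv Y) 0)
    refine this.congr_of_eventuallyEq (Filter.Eventually.of_forall fun x => ?_)
    dsimp only
    rw [← hYAC 0 x]; ring
  by_contra hlam
  push Not at hlam
  obtain ⟨s₀, hs₀⟩ := hYne
  set a := s₀ - T / 2 with ha
  set A : ℝ := 3 * (μ - 1) with hA
  set B : ℝ := 3 * μ ^ 2 - 6 * μ + 2 with hB
  have hC1 : ∀ {f : ℝ → ℂ} (L : ℂ →L[ℝ] ℝ), ContDiff ℝ 1 f →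
      AbsolutelyContinuousOnInterval (fun t => L (f t)) a (a + T) := by
    intro f L hf
    exact ContDiffOn.absolutelyContinuousOnInterval (L.contDiff.comp hf).contDiffOn
  have hFac : AbsolutelyContinuousOnInterval (energyAux A B Y) a (a + T) := by
    have r2 := re_ac_aux hYAC hI Complex.reCLM a (a + T)
    have i2 := re_ac_aux hYAC hI Complex.imCLM a (a + T)
    have r1 := hC1 Complex.reCLM hY1
    have i1 := hC1 Complex.imCLM hY1
    have r0 := hC1 Complex.reCLM hY0
    have i0 := hC1 Complex.imCLM hY0
    have := ((r2.mul r0).add (i2.mul i0)).add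
      (((((r1.mul r1).add (i1.mul i1)).const_mul (1 / 2)).neg.add
        (((r1.mul r0).add (i1.mul i0)).const_mul A)).add
        (((r0.mul r0).add (i0.mul i0)).const_mul (B / 2)))
    refine Eq.mp (congrArg (fun f : ℝ → ℝ => AbsolutelyContinuousOnInterval f a (a + T)) ?_) this
    funext t
    simp [energyAux]
    ring
  have hFper : energyAux A B Y (a + T) = energyAux A B Y a := by
    simp only [energyAux, hper2 a, hper1 a, hYper a]
  have hint0 : ∫ x in a..(a + T), deriv (energyAux A B Y) x = 0 := by
    rw [hFac.integral_deriv_eq_sub, hFper, sub_self]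
  have hval : ∀ᵐ t, (n - 1) * |φ t| ^ (-n) * ‖Y t‖ ^ 2 ≤ deriv (energyAux A B Y) t := by
    filter_upwards [hd2, heq] with t ht he
    rw [(energyAux_hasDerivAt A B (hd0 t) (hd1 t) ht).deriv]
    have hre := congrArg Complex.re he
    have him := congrArg Complex.im he
    simp only [Complex.add_re, Complex.add_im, Complex.ofReal_re, Complex.ofReal_im, zero_mul,
      Complex.mul_re, Complex.mul_im] at hre him
    have hn : ‖Y t‖ ^ 2 = (Y t).re ^ 2 + (Y t).im ^ 2 := by
      rw [Complex.sq_norm, Complex.normSq_apply]; ring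
    rw [hn]
    set w := |φ t| ^ (-n)
    have e1 : (deriv (deriv (deriv Y)) t).re + A * (deriv (deriv Y) t).re + B * (deriv Y t).re
        = lam.re * (Y t).re - lam.im * (Y t).im - μ * (μ - 1) * (μ - 2) * (Y t).re
          - (1 - n) * w * (Y t).re := by linarith
    have e2 : (deriv (deriv (deriv Y)) t).im + A * (deriv (deriv Y) t).im + B * (deriv Y t).im
        = lam.re * (Y t).im + lam.im * (Y t).re - μ * (μ - 1) * (μ - 2) * (Y t).im
          - (1 - n) * w * (Y t).im := by linarith
    rw [e1, e2]
    have p1 : 0 ≤ A * ((deriv Y t).re ^ 2 + (deriv Y t).im ^ 2) :=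
      mul_nonneg (by rw [hA]; linarith) (by positivity)
    have p2 : 0 ≤ lam.re * ((Y t).re ^ 2 + (Y t).im ^ 2) := mul_nonneg hlam (by positivity)
    have p3 : 0 ≤ (μ * (μ - 1) * (2 - μ)) * ((Y t).re ^ 2 + (Y t).im ^ 2) :=
      mul_nonneg (mul_nonneg (mul_nonneg (by linarith) (by linarith)) (by linarith))
        (by positivity)
    linarith
  have hw : ∀ t, 0 ≤ (n - 1) * |φ t| ^ (-n) * ‖Y t‖ ^ 2 := fun t =>
    mul_nonneg (mul_nonneg (by linarith) (Real.rpow_nonneg (abs_nonneg _) _)) (by positivity)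
  have hzero := (intervalIntegral.integral_eq_zero_iff_of_nonneg_ae
    (ae_restrict_of_ae (by filter_upwards [hval] with t ht using (hw t).trans ht))
    hFac.intervalIntegrable_deriv).mp hint0
  have hsub : Set.Ioo a (a + T) ⊆ Set.Ioc a (a + T) ∪ Set.Ioc (a + T) a := fun x hx =>
    Or.inl ⟨hx.1, hx.2.le⟩
  have hφ0 : ∀ᵐ t, φ t ≠ 0 := by
    rw [ae_iff]; simpa using hφzero
  have hY0ae : Y =ᵐ[volume.restrict (Set.Ioo a (a + T))] fun _ => 0 := by
    filter_upwards [ae_restrict_of_ae_restrict_of_subset hsub hzero, ae_restrict_of_ae hval,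
      ae_restrict_of_ae hφ0] with t h1 h2 h3
    by_contra hne
    have hpos : 0 < (n - 1) * |φ t| ^ (-n) * ‖Y t‖ ^ 2 :=
      mul_pos (mul_pos (by linarith) (Real.rpow_pos_of_pos (abs_pos.mpr h3) _))
        (by have := norm_pos_iff.mpr hne; positivity)
    simp only [Pi.zero_apply] at h1
    linarith
  have := Measure.eqOn_open_of_ae_eq hY0ae isOpen_Ioo hY0.continuous.continuousOn
    continuousOn_const
  exact hs₀ (this (x := s₀) ⟨by linarith, by linarith⟩)
end

section
/- Let n ∈ (0, 1) and β = 1/(4 + n). Then there exists exactly one function F : ℝ → ℝ of class C³ with compact support satisfying |F(y)|^n F'''(y) = β y F(y) for all y ∈ ℝ and ∫_ℝ F(y) dy = 1. Moreover F is even, its support is a bounded symmetric interval [−y₀, y₀], and F changes sign (it is oscillatory near the interface points ±y₀). -/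
open MeasureTheory

namespace CPS

/-- The nonlinearity `|s|^{-n} s`. -/
noncomputable def phi (n s : ℝ) : ℝ := |s| ^ (-n) * s

lemma phi_zero (n : ℝ) : phi n 0 = 0 := by simp [phi]

lemma phi_neg (n s : ℝ) : phi n (-s) = - phi n s := by simp [phi]

lemma phi_of_nonneg {n s : ℝ} (h1 : n < 1) (hs : 0 ≤ s) : phi n s = s ^ (1 - n) := by
  rcases hs.eq_or_lt with h | h
  · subst h
    rw [phi_zero, Real.zero_rpow (by linarith)]
  · rw [phi, abs_of_pos h, ← Real.rpow_add_one h.ne']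
    ring_nf

lemma abs_phi {n : ℝ} (h1 : n < 1) (s : ℝ) : |phi n s| = |s| ^ (1 - n) := by
  have : |phi n s| = phi n |s| := by
    simp only [phi, abs_mul, abs_abs]
    rw [abs_of_nonneg (Real.rpow_nonneg (abs_nonneg s) _)]
  rw [this, phi_of_nonneg h1 (abs_nonneg s)]

lemma mul_phi {n : ℝ} (h1 : n < 1) (s : ℝ) : s * phi n s = |s| ^ (2 - n) := by
  have : s * phi n s = |s| * phi n |s| := by
    simp only [phi, abs_abs]
    have := abs_mul_abs_self s
    linear_combination (-|s| ^ (-n)) * this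
  rw [this, phi_of_nonneg h1 (abs_nonneg s)]
  rcases (abs_nonneg s).eq_or_lt with h | h
  · rw [← h, Real.zero_rpow (by linarith), Real.zero_rpow (by linarith), zero_mul]
  · rw [mul_comm, ← Real.rpow_add_one h.ne']
    ring_nf

lemma phi_nonneg {n s : ℝ} (hs : 0 ≤ s) : 0 ≤ phi n s :=
  mul_nonneg (Real.rpow_nonneg (abs_nonneg s) _) hs

lemma phi_pos {n s : ℝ} (hs : 0 < s) : 0 < phi n s :=
  mul_pos (Real.rpow_pos_of_pos (abs_pos.mpr hs.ne') _) hs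

lemma abs_pow_mul_phi (n s : ℝ) : |s| ^ n * phi n s = s := by
  rcases eq_or_ne s 0 with h | h
  · subst h; simp [phi]
  · rw [phi, ← mul_assoc, ← Real.rpow_add (abs_pos.mpr h)]
    simp

lemma phi_lt {n : ℝ} (h1 : n < 1) : StrictMono (phi n) := by
  intro a b hab
  rcases le_or_gt 0 a with ha | ha
  · rw [phi_of_nonneg h1 ha, phi_of_nonneg h1 (ha.trans hab.le)]
    exact Real.rpow_lt_rpow ha hab (by linarith)
  · rcases le_or_gt b 0 with hb | hb
    · have h := Real.rpow_lt_rpow (by linarith : 0 ≤ -b) (by linarith : -b < -a)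
        (by linarith : 0 < 1 - n)
      rw [← phi_of_nonneg h1 (by linarith), ← phi_of_nonneg h1 (by linarith), phi_neg, phi_neg] at h
      linarith
    · have h2 : 0 < phi n (-a) := phi_pos (by linarith)
      rw [phi_neg] at h2
      linarith [phi_pos (n := n) hb]

lemma phi_cont {n : ℝ} (h1 : n < 1) : Continuous (phi n) := by
  have e : phi n = fun s => (max s 0) ^ (1 - n) - (max (-s) 0) ^ (1 - n) := by
    funext s
    rcases le_or_gt 0 s with h | h
    · rw [max_eq_left h, max_eq_right (by linarith), phi_of_nonneg h1 h,
        Real.zero_rpow (by linarith), sub_zero]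
    · rw [max_eq_right h.le, max_eq_left (by linarith), ← phi_of_nonneg h1 (by linarith : 0 ≤ -s),
        phi_neg, Real.zero_rpow (by linarith)]
      ring
  rw [e]
  have h : (0:ℝ) ≤ 1 - n := by linarith
  exact ((continuous_id.max continuous_const).rpow_const (fun _ => Or.inr h)).sub
    ((continuous_neg.max continuous_const).rpow_const (fun _ => Or.inr h))

lemma abs_phi_le {n s X : ℝ} (h1 : n < 1) (hs : |s| ≤ X) : |phi n s| ≤ X ^ (1 - n) := by
  rw [abs_phi h1]
  exact Real.rpow_le_rpow (abs_nonneg s) hs (by linarith)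

lemma phi_le {n s X : ℝ} (h1 : n < 1) (hX : 0 ≤ X) (hs : s ≤ X) : phi n s ≤ X ^ (1 - n) := by
  rw [← phi_of_nonneg h1 hX]
  exact (phi_lt h1).monotone hs

lemma phi_mono_mul {n : ℝ} (h1 : n < 1) (a b : ℝ) : 0 ≤ (a - b) * (phi n a - phi n b) := by
  rcases le_total a b with h | h
  · exact mul_nonneg_of_nonpos_of_nonpos (by linarith) (by linarith [(phi_lt h1).monotone h])
  · exact mul_nonneg (by linarith) (by linarith [(phi_lt h1).monotone h])

/-- A function with nonnegative derivative and equal end values has zero derivative. -/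
lemma deriv_zero_of_ends {f f' : ℝ → ℝ} {a b : ℝ}
    (hd : ∀ y ∈ Set.Icc a b, HasDerivAt f (f' y) y)
    (hn : ∀ y ∈ Set.Icc a b, 0 ≤ f' y) (he : f b ≤ f a) :
    ∀ y ∈ Set.Ioo a b, f' y = 0 := by
  have hm : MonotoneOn f (Set.Icc a b) := by
    refine monotoneOn_of_hasDerivWithinAt_nonneg (f' := f') (convex_Icc a b)
      (fun y hy => (hd y hy).continuousAt.continuousWithinAt) ?_ ?_
    · intro y hy
      exact (hd y (interior_subset hy)).hasDerivWithinAt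
    · intro y hy
      exact hn y (interior_subset hy)
  intro y hy
  have hab : a ≤ b := (hy.1.trans hy.2).le
  have hc : ∀ z ∈ Set.Icc a b, f z = f a := by
    intro z hz
    have h1 := hm (Set.left_mem_Icc.mpr hab) hz hz.1
    have h2 := hm hz (Set.right_mem_Icc.mpr hab) hz.2
    linarith
  have : f =ᶠ[nhds y] fun _ => f a := by
    filter_upwards [Icc_mem_nhds hy.1 hy.2] with z hz using hc z hz
  have h3 := (hd y ⟨hy.1.le, hy.2.le⟩).congr_of_eventuallyEq this.symm
  exact h3.unique (hasDerivAt_const y (f a))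

lemma mono_of_deriv {f f' : ℝ → ℝ} {a b : ℝ}
    (hd : ∀ y ∈ Set.Icc a b, HasDerivAt f (f' y) y)
    (hn : ∀ y ∈ Set.Icc a b, 0 ≤ f' y) : MonotoneOn f (Set.Icc a b) := by
  refine monotoneOn_of_hasDerivWithinAt_nonneg (f' := f') (convex_Icc a b)
    (fun y hy => (hd y hy).continuousAt.continuousWithinAt) ?_ ?_
  · intro y hy
    exact (hd y (interior_subset hy)).hasDerivWithinAt
  · intro y hy
    exact hn y (interior_subset hy)

lemma anti_of_deriv {f f' : ℝ → ℝ} {a b : ℝ}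
    (hd : ∀ y ∈ Set.Icc a b, HasDerivAt f (f' y) y)
    (hn : ∀ y ∈ Set.Icc a b, f' y ≤ 0) : AntitoneOn f (Set.Icc a b) := by
  have := mono_of_deriv (f := fun y => - f y) (f' := fun y => - f' y) (a := a) (b := b)
    (fun y hy => (hd y hy).neg) (fun y hy => by linarith [hn y hy])
  intro x hx y hy hxy
  have h := this hx hy hxy
  simp only at h
  linarith

/-- A `C^3` solution of `F''' = β y φ(F)` on the line. -/
structure IsSol (n β : ℝ) (F F1 F2 : ℝ → ℝ) : Prop where
  d0 : ∀ y, HasDerivAt F (F1 y) y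
  d1 : ∀ y, HasDerivAt F1 (F2 y) y
  d2 : ∀ y, HasDerivAt F2 (β * y * phi n (F y)) y

lemma deriv_zero_of_ev {f f' : ℝ → ℝ} (hd : ∀ y, HasDerivAt f (f' y) y) {s : Set ℝ}
    (hs : IsOpen s) (h0 : ∀ y ∈ s, f y = 0) : ∀ y ∈ s, f' y = 0 := by
  intro y hy
  have : f =ᶠ[nhds y] fun _ => (0:ℝ) := by
    filter_upwards [hs.mem_nhds hy] with z hz using h0 z hz
  exact ((hd y).congr_of_eventuallyEq this.symm).unique (hasDerivAt_const y 0)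

lemma outside_open (R : ℝ) : IsOpen {y : ℝ | R < |y|} := isOpen_lt continuous_const continuous_abs

lemma IsSol.zero1 {n β R : ℝ} {F F1 F2 : ℝ → ℝ} (h : IsSol n β F F1 F2)
    (h0 : ∀ y, R < |y| → F y = 0) : ∀ y, R < |y| → F1 y = 0 :=
  deriv_zero_of_ev h.d0 (outside_open R) h0

lemma IsSol.zero2 {n β R : ℝ} {F F1 F2 : ℝ → ℝ} (h : IsSol n β F F1 F2)
    (h0 : ∀ y, R < |y| → F y = 0) : ∀ y, R < |y| → F2 y = 0 :=
  deriv_zero_of_ev h.d1 (outside_open R) (h.zero1 h0)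

lemma IsSol.cont {n β : ℝ} {F F1 F2 : ℝ → ℝ} (h : IsSol n β F F1 F2) : Continuous F :=
  continuous_iff_continuousAt.mpr fun y => (h.d0 y).continuousAt

/-- Two compactly supported solutions with the same mass of `φ(F)` coincide. -/
lemma unique_mass {n β : ℝ} (h1 : n < 1) (hβ : 0 < β) {F F1 F2 G G1 G2 : ℝ → ℝ}
    (hF : IsSol n β F F1 F2) (hG : IsSol n β G G1 G2) {R : ℝ} (hR : 0 ≤ R)
    (F0 : ∀ y, R < |y| → F y = 0) (G0 : ∀ y, R < |y| → G y = 0)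
    (hm : ∫ y in (-(R+1))..(R+1), phi n (F y) = ∫ y in (-(R+1))..(R+1), phi n (G y)) :
    F = G := by
  set L := R + 1 with hL
  set h : ℝ → ℝ := fun y => phi n (F y) - phi n (G y) with hh
  have hcF : Continuous fun y => phi n (F y) := (phi_cont h1).comp hF.cont
  have hcG : Continuous fun y => phi n (G y) := (phi_cont h1).comp hG.cont
  have hc : Continuous h := hcF.sub hcG
  set H1 : ℝ → ℝ := fun y => ∫ t in (-L)..y, h t with hH1
  have D1 : ∀ y, HasDerivAt H1 (h y) y := fun y => hc.integral_hasStrictDerivAt _ y |>.hasDerivAt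
  have C1 : Continuous H1 := continuous_iff_continuousAt.mpr fun y => (D1 y).continuousAt
  set H2 : ℝ → ℝ := fun y => ∫ t in (-L)..y, H1 t with hH2
  have D2 : ∀ y, HasDerivAt H2 (H1 y) y := fun y => C1.integral_hasStrictDerivAt _ y |>.hasDerivAt
  have C2 : Continuous H2 := continuous_iff_continuousAt.mpr fun y => (D2 y).continuousAt
  set H3 : ℝ → ℝ := fun y => ∫ t in (-L)..y, H2 t with hH3
  have D3 : ∀ y, HasDerivAt H3 (H2 y) y := fun y => C2.integral_hasStrictDerivAt _ y |>.hasDerivAt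
  have C3 : Continuous H3 := continuous_iff_continuousAt.mpr fun y => (D3 y).continuousAt
  set H4 : ℝ → ℝ := fun y => ∫ t in (-L)..y, H3 t with hH4
  have D4 : ∀ y, HasDerivAt H4 (H3 y) y := fun y => C3.integral_hasStrictDerivAt _ y |>.hasDerivAt
  have a1 : H1 (-L) = 0 := by simp [hH1]
  have a2 : H2 (-L) = 0 := by simp [hH2]
  have a3 : H3 (-L) = 0 := by simp [hH3]
  have a4 : H4 (-L) = 0 := by simp [hH4]
  have b1 : H1 L = 0 := by
    simp only [hH1, hh]
    rw [intervalIntegral.integral_sub (hcF.intervalIntegrable _ _) (hcG.intervalIntegrable _ _), hm,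
      sub_self]
  have hLm : R < |-L| := by rw [abs_neg, abs_of_nonneg (by linarith)]; linarith
  have hLp : R < |L| := by rw [abs_of_nonneg (by linarith)]; linarith
  have const_eq : ∀ {u u' : ℝ → ℝ}, (∀ y, HasDerivAt u (u' y) y) → (∀ y, u' y = 0) →
      u (-L) = 0 → ∀ y, u y = 0 := by
    intro u u' hu h0 ha y
    have := is_const_of_deriv_eq_zero (f := u) (fun y => (hu y).differentiableAt)
      (fun y => by rw [(hu y).deriv, h0]) y (-L)
    rw [this, ha]
  have e2 : ∀ y, F2 y - G2 y - β * (y * H1 y - H2 y) = 0 := by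
    refine const_eq (u' := fun y => β * y * phi n (F y) - β * y * phi n (G y)
      - β * ((1 * H1 y + y * h y) - H1 y)) ?_ ?_ ?_
    · intro y
      exact ((hF.d2 y).sub (hG.d2 y)).sub ((((hasDerivAt_id y).mul (D1 y)).sub (D2 y)).const_mul β)
    · intro y; simp only [hh]; ring
    · simp [hF.zero2 F0 _ hLm, hG.zero2 G0 _ hLm, a1, a2]
  have e1 : ∀ y, F1 y - G1 y - β * (y * H2 y - 2 * H3 y) = 0 := by
    refine const_eq (u' := fun y => F2 y - G2 y
      - β * ((1 * H2 y + y * H1 y) - 2 * H2 y)) ?_ ?_ ?_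
    · intro y
      exact ((hF.d1 y).sub (hG.d1 y)).sub
        ((((hasDerivAt_id y).mul (D2 y)).sub ((D3 y).const_mul 2)).const_mul β)
    · intro y; linear_combination e2 y
    · simp [hF.zero1 F0 _ hLm, hG.zero1 G0 _ hLm, a3, a2]
  have e0 : ∀ y, F y - G y - β * (y * H3 y - 3 * H4 y) = 0 := by
    refine const_eq (u' := fun y => F1 y - G1 y
      - β * ((1 * H3 y + y * H2 y) - 3 * H3 y)) ?_ ?_ ?_
    · intro y
      exact ((hF.d0 y).sub (hG.d0 y)).sub
        ((((hasDerivAt_id y).mul (D3 y)).sub ((D4 y).const_mul 3)).const_mul β)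
    · intro y; linear_combination e1 y
    · simp [F0 _ hLm, G0 _ hLm, a3, a4]
  have b2 : H2 L = 0 := by
    have := e2 L
    rw [hF.zero2 F0 _ hLp, hG.zero2 G0 _ hLp, b1] at this
    have h5 : β * H2 L = 0 := by linear_combination this
    exact (mul_eq_zero.mp h5).resolve_left hβ.ne'
  have b3 : H3 L = 0 := by
    have := e1 L
    rw [hF.zero1 F0 _ hLp, hG.zero1 G0 _ hLp, b2] at this
    have h5 : β * H3 L = 0 := by linear_combination this / 2
    exact (mul_eq_zero.mp h5).resolve_left hβ.ne'
  have b4 : H4 L = 0 := by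
    have := e0 L
    rw [F0 _ hLp, G0 _ hLp, b3] at this
    have h5 : β * H4 L = 0 := by linear_combination this / 3
    exact (mul_eq_zero.mp h5).resolve_left hβ.ne'
  have key := deriv_zero_of_ends (a := -L) (b := L)
    (f := fun y => y * H3 y * H1 y - 3 * (H4 y * H1 y) + 2 * (H3 y * H2 y)
      - y * H2 y * H2 y / 2)
    (f' := fun y => (y * H3 y - 3 * H4 y) * h y + 3 / 2 * H2 y ^ 2) ?_ ?_ ?_
  · funext y
    by_cases hy : R < |y|
    · rw [F0 y hy, G0 y hy]
    · have hy' : |y| < L := by push Not at hy; linarith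
      have h6 := key y (abs_lt.mp hy')
      have h7 : (F y - G y) * (phi n (F y) - phi n (G y)) = - (β * (3 / 2 * H2 y ^ 2)) := by
        have := e0 y
        simp only [hh] at h6
        linear_combination (phi n (F y) - phi n (G y)) * this + β * h6
      have h8 := phi_mono_mul h1 (F y) (G y)
      have h9 : 0 ≤ β * (3 / 2 * H2 y ^ 2) := by positivity
      have h10 : (F y - G y) * (phi n (F y) - phi n (G y)) = 0 := by linarith
      rcases mul_eq_zero.mp h10 with h | h
      · linarith
      · exact (phi_lt h1).injective (by linarith)
  · intro y _
    have hid := hasDerivAt_id y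
    have := (((((hid.mul (D3 y)).mul (D1 y)).sub (((D4 y).mul (D1 y)).const_mul 3)).add
      (((D3 y).mul (D2 y)).const_mul 2))).sub (((hid.mul (D2 y)).mul (D2 y)).div_const 2)
    refine this.congr_deriv ?_
    simp only [id, Pi.mul_apply]
    ring
  · intro y _
    have h8 := phi_mono_mul h1 (F y) (G y)
    have h9 : β * ((y * H3 y - 3 * H4 y) * h y) = (F y - G y) * (phi n (F y) - phi n (G y)) := by
      simp only [hh]
      linear_combination (-(phi n (F y) - phi n (G y))) * e0 y
    have h10 : 0 ≤ (y * H3 y - 3 * H4 y) * h y := by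
      by_contra hcon
      push Not at hcon
      have := mul_neg_of_pos_of_neg hβ hcon
      linarith
    positivity
  · simp [a1, a2, b1, b2]

end CPS

namespace CPS

lemma key_ineq {n t : ℝ} (h0 : 0 < n) (h1 : n < 1) (ht : 0 ≤ t) :
    (2 - n) * t ^ (1 - n) ≤ n + (2 - n) * t := by
  -- weighted AM-GM with scale `e`
  have hA := Real.geom_mean_le_arith_mean2_weighted (w₁ := n) (w₂ := 1 - n) (p₁ := 1)
    (p₂ := Real.exp 1 * t) h0.le (by linarith) zero_le_one (by positivity) (by ring)
  rw [Real.one_rpow, one_mul, mul_one, Real.mul_rpow (Real.exp_pos 1).le ht,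
    ← Real.exp_mul, one_mul] at hA
  have e1 : 2 - n ≤ Real.exp (1 - n) := by linarith [Real.add_one_le_exp (1 - n)]
  have e2 : (1 - n) * Real.exp 1 ≤ Real.exp (1 - n) := by
    have : Real.exp 1 * Real.exp (-n) = Real.exp (1 - n) := by rw [← Real.exp_add]; ring_nf
    have h3 := Real.add_one_le_exp (-n)
    rw [← this]
    nlinarith [Real.exp_pos 1]
  set E := Real.exp (1 - n) with hE
  have hEp : 0 < E := Real.exp_pos _
  -- multiply the target by E
  have h5 : E * ((2 - n) * t ^ (1 - n)) ≤ E * (n + (2 - n) * t) := by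
    have h6 : (2 - n) * (E * t ^ (1 - n)) ≤ (2 - n) * (n + (1 - n) * (Real.exp 1 * t)) :=
      mul_le_mul_of_nonneg_left hA (by linarith)
    have h7 : (2 - n) * ((1 - n) * Real.exp 1 * t) ≤ (2 - n) * (E * t) :=
      mul_le_mul_of_nonneg_left (mul_le_mul_of_nonneg_right e2 ht) (by linarith)
    have h8 : (2 - n) * n ≤ E * n := mul_le_mul_of_nonneg_right e1 h0.le
    nlinarith
  exact le_of_mul_le_mul_left h5 hEp

lemma key_ineq2 {n v : ℝ} (h0 : 0 < n) (h1 : n < 1) :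
    0 ≤ (2 - n) * |v| ^ (2 - n) - (2 - n) * phi n v + n + (2 - n) * v := by
  rcases le_total 0 v with h | h
  · rw [phi_of_nonneg h1 h, abs_of_nonneg h]
    have := key_ineq h0 h1 h
    have h2 : 0 ≤ (2 - n) * v ^ (2 - n) := mul_nonneg (by linarith) (Real.rpow_nonneg h _)
    linarith
  · obtain ⟨t, rfl⟩ : ∃ t, v = -t := ⟨-v, by ring⟩
    have ht : 0 ≤ t := by linarith
    rw [phi_neg, phi_of_nonneg h1 ht, abs_neg, abs_of_nonneg ht]
    have a1 : 0 ≤ t ^ (2 - n) := Real.rpow_nonneg ht _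
    have a2 : 0 ≤ t ^ (1 - n) := Real.rpow_nonneg ht _
    have : t ≤ t ^ (2 - n) + t ^ (1 - n) := by
      rcases le_total t 1 with h3 | h3
      · have := Real.rpow_le_rpow_of_exponent_ge_of_imp ht h3 (by linarith : 1 - n ≤ 1)
          (by intro _ h; linarith)
        rw [Real.rpow_one] at this
        linarith
      · have := Real.rpow_le_rpow_of_exponent_le h3 (by linarith : 1 ≤ 2 - n)
        rw [Real.rpow_one] at this
        linarith
    nlinarith

lemma phi_mul {n a b : ℝ} (ha : 0 ≤ a) (h1 : n < 1) :
    phi n (a * b) = a ^ (1 - n) * phi n b := by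
  rw [← phi_of_nonneg h1 ha, phi, phi, phi, abs_mul,
    Real.mul_rpow (abs_nonneg a) (abs_nonneg b)]
  ring

/-- Homogeneous version: `y|v|^p - φ(v) P ≥ V_y + V_P v` with `V = -(1/p)|P|^p y^{2-p}`. -/
lemma key_ineq3 {n v P y : ℝ} (h0 : 0 < n) (h1 : n < 1) (hy : 0 < y) :
    0 ≤ (2 - n) * (y * |v| ^ (2 - n) - phi n v * P)
      + ((2 - n) * phi n P * v * y ^ n + |P| ^ (2 - n) * (n * y ^ (n - 1))) := by
  -- first for positive P
  have pos : ∀ v P : ℝ, 0 < P → 0 ≤ (2 - n) * (y * |v| ^ (2 - n) - phi n v * P)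
      + ((2 - n) * phi n P * v * y ^ n + |P| ^ (2 - n) * (n * y ^ (n - 1))) := by
    intro v P hP
    set A := P / y with hA
    have hApos : 0 < A := div_pos hP hy
    set u := v / A with hu
    have hv : v = A * u := by rw [hu]; field_simp
    have hPA : P = A * y := by rw [hA]; field_simp
    have k := key_ineq2 (v := u) h0 h1
    have c : 0 < y * A ^ (2 - n) := by positivity
    have e1 : |v| ^ (2 - n) = A ^ (2 - n) * |u| ^ (2 - n) := by
      rw [hv, abs_mul, Real.mul_rpow (abs_nonneg _) (abs_nonneg _), abs_of_pos hApos]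
    have e2 : phi n v = A ^ (1 - n) * phi n u := by rw [hv, phi_mul hApos.le h1]
    have e3 : A ^ (2 - n) = A ^ (1 - n) * A := by
      rw [← Real.rpow_add_one hApos.ne']; ring_nf
    have e4 : phi n P = A ^ (1 - n) * y ^ (1 - n) := by
      rw [hPA, phi_mul hApos.le h1, phi_of_nonneg h1 hy.le]
    have e5 : y ^ (1 - n) * y ^ n = y := by
      rw [← Real.rpow_add hy]; simp
    have e6 : |P| ^ (2 - n) = A ^ (2 - n) * y ^ (2 - n) := by
      rw [abs_of_pos hP, hPA, Real.mul_rpow hApos.le hy.le]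
    have e7 : y ^ (2 - n) * y ^ (n - 1) = y := by
      rw [← Real.rpow_add hy]; ring_nf; simp
    have := mul_nonneg c.le k
    have e8 : (2 - n) * (y * |v| ^ (2 - n) - phi n v * P)
      + ((2 - n) * phi n P * v * y ^ n + |P| ^ (2 - n) * (n * y ^ (n - 1)))
      = y * A ^ (2 - n) * ((2 - n) * |u| ^ (2 - n) - (2 - n) * phi n u + n + (2 - n) * u) := by
      rw [e1, e2, e4, e6]
      calc _ = (2 - n) * (y * (A ^ (2 - n) * |u| ^ (2 - n)) - A ^ (1 - n) * phi n u * P)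
            + ((2 - n) * A ^ (1 - n) * (y ^ (1 - n) * y ^ n) * v
              + A ^ (2 - n) * n * (y ^ (2 - n) * y ^ (n - 1))) := by ring
        _ = _ := by
          rw [e5, e7, hPA, hv, e3]; ring
    rw [e8]; exact this
  rcases lt_trichotomy P 0 with h | h | h
  · have := pos (-v) (-P) (by linarith)
    rw [phi_neg, phi_neg, abs_neg, abs_neg] at this
    linarith
  · subst h
    rw [phi_zero, abs_zero, Real.zero_rpow (by linarith)]
    have : 0 ≤ (2 - n) * (y * |v| ^ (2 - n)) := by
      have : 0 ≤ |v| ^ (2 - n) := Real.rpow_nonneg (abs_nonneg _) _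
      have h3 : 0 ≤ 2 - n := by linarith
      positivity
    linarith
  · exact pos v P h

set_option maxHeartbeats 1000000 in
/-- A compactly supported solution with `F'(0) = 0` and zero integral on the half line vanishes
there. -/
lemma mass_zero {n β : ℝ} (h0 : 0 < n) (h1 : n < 1) (hβ : 0 < β) {F F1 F2 : ℝ → ℝ}
    (hF : IsSol n β F F1 F2) {L : ℝ} (hL : 0 < L)
    (hz : F1 0 = 0) (l0 : F L = 0) (l1 : F1 L = 0)
    (hm : ∫ y in (0:ℝ)..L, F y = 0) : ∀ y ∈ Set.Ioo 0 L, F y = 0 := by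
  set P : ℝ → ℝ := fun y => ∫ t in (0:ℝ)..y, F t with hP
  have DP : ∀ y, HasDerivAt P (F y) y := fun y =>
    hF.cont.integral_hasStrictDerivAt _ y |>.hasDerivAt
  have P0 : P 0 = 0 := by simp [hP]
  have PL : P L = 0 := hm
  -- derivatives of `A = P / y`
  set A : ℝ → ℝ := fun y => P y / y with hA
  set A1 : ℝ → ℝ := fun y => (F y - A y) / y with hA1
  set A2 : ℝ → ℝ := fun y => (F1 y - 2 * A1 y) / y with hA2
  set A3 : ℝ → ℝ := fun y => (F2 y - 3 * A2 y) / y with hA3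
  have DA : ∀ y, 0 < y → HasDerivAt A (A1 y) y := by
    intro y hy
    have := (DP y).div (hasDerivAt_id y) hy.ne'
    refine this.congr_deriv ?_
    simp only [hA1, hA, id]; field_simp
  have DA1 : ∀ y, 0 < y → HasDerivAt A1 (A2 y) y := by
    intro y hy
    have := ((hF.d0 y).sub (DA y hy)).div (hasDerivAt_id y) hy.ne'
    refine this.congr_deriv ?_
    simp only [hA2, hA1, id, Pi.sub_apply]; field_simp; ring
  have DA2 : ∀ y, 0 < y → HasDerivAt A2 (A3 y) y := by
    intro y hy
    have := ((hF.d1 y).sub ((DA1 y hy).const_mul 2)).div (hasDerivAt_id y) hy.ne'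
    refine this.congr_deriv ?_
    simp only [hA3, hA2, id, Pi.sub_apply]; field_simp; ring
  have DA3 : ∀ y, 0 < y → HasDerivAt A3 ((β * y * phi n (F y) - 4 * A3 y) / y) y := by
    intro y hy
    have := ((hF.d2 y).sub ((DA2 y hy).const_mul 3)).div (hasDerivAt_id y) hy.ne'
    refine this.congr_deriv ?_
    simp only [hA3, id, Pi.sub_apply]; field_simp; ring
  set W : ℝ → ℝ := fun y => y ^ 2 * A1 y * A3 y + 2 * (y * A1 y * A2 y) - A1 y * A1 y
      - 1 / 2 * (y ^ 2 * A2 y * A2 y) with hW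
  set V : ℝ → ℝ := fun y => |P y| ^ (2 - n) * y ^ n with hV
  have hn2 : 0 < 2 - n := by linarith
  have DW : ∀ y, 0 < y → HasDerivAt W (β * y * phi n (F y) * (F y - A y) + y * A2 y ^ 2) y := by
    intro y hy
    have hp : HasDerivAt (fun y : ℝ => y ^ 2) (2 * y) y := by simpa using hasDerivAt_pow 2 y
    have hid := hasDerivAt_id y
    have d1 := DA1 y hy
    have d2 := DA2 y hy
    have d3 := DA3 y hy
    have := ((((hp.mul d1).mul d3).add (((hid.mul d1).mul d2).const_mul 2)).sub (d1.mul d1)).sub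
      (((hp.mul d2).mul d2).const_mul (1/2))
    refine this.congr_deriv ?_
    have e : F y - A y = y * A1 y := by simp only [hA1]; field_simp
    rw [e]
    simp only [id, Pi.mul_apply]
    field_simp
    ring
  have DV : ∀ y, 0 < y → HasDerivAt V
      ((2 - n) * phi n (P y) * F y * y ^ n + |P y| ^ (2 - n) * (n * y ^ (n - 1))) y := by
    intro y hy
    have a := (hasDerivAt_abs_rpow (P y) (by linarith : 1 < 2 - n)).comp y (DP y)
    have b := Real.hasDerivAt_rpow_const (x := y) (p := n) (Or.inl hy.ne')
    have := a.mul b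
    refine this.congr_deriv ?_
    simp only [phi, Function.comp]
    ring_nf
  set f : ℝ → ℝ := fun y => W y + β / (2 - n) * V y with hf
  set f' : ℝ → ℝ := fun y => (β * y * phi n (F y) * (F y - A y) + y * A2 y ^ 2)
    + β / (2 - n) * ((2 - n) * phi n (P y) * F y * y ^ n + |P y| ^ (2 - n) * (n * y ^ (n - 1)))
    with hf'
  have Df : ∀ y, 0 < y → HasDerivAt f (f' y) y := fun y hy =>
    (DW y hy).add ((DV y hy).const_mul _)
  have f'lb : ∀ y, 0 < y → y * A2 y ^ 2 ≤ f' y := by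
    intro y hy
    have k := key_ineq3 (v := F y) (P := P y) h0 h1 hy
    have e : β * y * phi n (F y) * (F y - A y)
        = β / (2 - n) * ((2 - n) * (y * |F y| ^ (2 - n) - phi n (F y) * P y)) := by
      rw [← mul_phi h1]; simp only [hA]; field_simp
    simp only [hf']
    rw [e]
    have : 0 ≤ β / (2 - n) := by positivity
    have := mul_nonneg this k
    linarith
  have fL : f L = 0 := by
    have AL : A L = 0 := by simp [hA, PL]
    have A1L : A1 L = 0 := by simp [hA1, AL, l0]
    have A2L : A2 L = 0 := by simp [hA2, A1L, l1]
    have VL : V L = 0 := by simp [hV, PL, Real.zero_rpow hn2.ne']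
    simp [hf, hW, A1L, A2L, VL]
  -- behaviour at zero
  have lim0 : Filter.Tendsto f (nhdsWithin 0 (Set.Ioi 0)) (nhds 0) := by
    have cF2 : Continuous F2 := continuous_iff_continuousAt.mpr fun y => (hF.d2 y).continuousAt
    obtain ⟨C, hC⟩ := (isCompact_Icc (a := (0:ℝ)) (b := 1)).exists_bound_of_continuousOn
      cF2.continuousOn
    have hC0 : 0 ≤ C := (norm_nonneg _).trans (hC 0 ⟨le_rfl, zero_le_one⟩)
    have bF1 : ∀ y ∈ Set.Icc (0:ℝ) 1, |F1 y| ≤ C * y := by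
      intro y hy
      have := Convex.norm_image_sub_le_of_norm_hasDerivWithin_le (f := F1) (f' := F2) (C := C)
        (s := Set.Icc 0 1) (x := 0) (y := y) (fun z _ => (hF.d1 z).hasDerivWithinAt) hC
        (convex_Icc 0 1) ⟨le_rfl, zero_le_one⟩ hy
      simpa [hz, abs_of_nonneg hy.1] using this
    -- |y F - P| ≤ C y^3
    have bQ : ∀ y ∈ Set.Icc (0:ℝ) 1, |y * F y - P y| ≤ C * y ^ 3 := by
      intro y hy
      have hd : ∀ z, HasDerivAt (fun z => z * F z - P z) (z * F1 z) z := by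
        intro z
        have := ((hasDerivAt_id z).mul (hF.d0 z)).sub (DP z)
        refine this.congr_deriv ?_
        simp
      have := Convex.norm_image_sub_le_of_norm_hasDerivWithin_le (f := fun z => z * F z - P z)
        (f' := fun z => z * F1 z) (C := C * y ^ 2)
        (s := Set.Icc 0 y) (x := 0) (y := y) (fun z _ => (hd z).hasDerivWithinAt) ?_
        (convex_Icc 0 y) ⟨le_rfl, hy.1⟩ ⟨hy.1, le_rfl⟩
      · simp only [P0, zero_mul, sub_zero, Real.norm_eq_abs, abs_of_nonneg hy.1] at this
        calc _ ≤ C * y ^ 2 * y := this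
          _ = _ := by ring
      · intro z hz'
        have h3 := bF1 z ⟨hz'.1, hz'.2.trans hy.2⟩
        rw [Real.norm_eq_abs, abs_mul, abs_of_nonneg hz'.1]
        have : z * |F1 z| ≤ y * (C * y) := mul_le_mul hz'.2
          (h3.trans (mul_le_mul_of_nonneg_left hz'.2 hC0)) (abs_nonneg _) hy.1
        linarith
    have bA1 : ∀ y ∈ Set.Ioc (0:ℝ) 1, |A1 y| ≤ C * y := by
      intro y hy
      have e : A1 y = (y * F y - P y) / y ^ 2 := by
        have := hy.1.ne'
        simp only [hA1, hA]; field_simp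
      rw [e, abs_div, abs_of_pos (pow_pos hy.1 2), div_le_iff₀ (pow_pos hy.1 2)]
      calc _ ≤ C * y ^ 3 := bQ y ⟨hy.1.le, hy.2⟩
        _ = _ := by ring
    have bA2 : ∀ y ∈ Set.Ioc (0:ℝ) 1, |A2 y| ≤ 3 * C := by
      intro y hy
      simp only [hA2]
      rw [abs_div, abs_of_pos hy.1, div_le_iff₀ hy.1]
      have a := bA1 y hy
      have b := bF1 y ⟨hy.1.le, hy.2⟩
      have c : |F1 y - 2 * A1 y| ≤ |F1 y| + 2 * |A1 y| := by
        have := abs_sub (F1 y) (2 * A1 y)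
        rwa [abs_mul, abs_two] at this
      linarith
    have bA3 : ∀ y ∈ Set.Ioc (0:ℝ) 1, |y * A3 y| ≤ 10 * C := by
      intro y hy
      have e : y * A3 y = F2 y - 3 * A2 y := by
        have := hy.1.ne'
        simp only [hA3]; field_simp
      rw [e]
      have a := bA2 y hy
      have b := hC y ⟨hy.1.le, hy.2⟩
      rw [Real.norm_eq_abs] at b
      have c : |F2 y - 3 * A2 y| ≤ |F2 y| + 3 * |A2 y| := by
        have := abs_sub (F2 y) (3 * A2 y)
        rwa [abs_mul, abs_of_pos (by norm_num : (0:ℝ) < 3)] at this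
      linarith
    have bW : ∀ y ∈ Set.Ioc (0:ℝ) 1, |W y| ≤ 30 * C ^ 2 * y := by
      intro y hy
      have a1 := bA1 y hy
      have a2 := bA2 y hy
      have a3 := bA3 y hy
      have hy0 := hy.1.le
      have t1 : |y * A1 y * (y * A3 y)| ≤ y * (C * y) * (10 * C) := by
        rw [abs_mul, abs_mul, abs_of_nonneg hy0]; gcongr
      have t2 : |y * A1 y * A2 y| ≤ y * (C * y) * (3 * C) := by
        rw [abs_mul, abs_mul, abs_of_nonneg hy0]; gcongr
      have t3 : |A1 y * A1 y| ≤ (C * y) * (C * y) := by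
        rw [abs_mul]; gcongr
      have t4 : |y ^ 2 * A2 y * A2 y| ≤ y ^ 2 * (3 * C) * (3 * C) := by
        rw [abs_mul, abs_mul, abs_of_nonneg (pow_nonneg hy0 2)]; gcongr
      have hyy : C ^ 2 * y ^ 2 ≤ C ^ 2 * y := by
        have : y ^ 2 ≤ y := by nlinarith [hy.2]
        exact mul_le_mul_of_nonneg_left this (sq_nonneg C)
      have e : W y = y * A1 y * (y * A3 y) + 2 * (y * A1 y * A2 y) - A1 y * A1 y
        - 1 / 2 * (y ^ 2 * A2 y * A2 y) := by simp only [hW]; ring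
      rw [e]
      rw [abs_le] at t1 t2 t3 t4 ⊢
      have := mul_nonneg (sq_nonneg C) hy0
      constructor <;> nlinarith
    have lW : Filter.Tendsto W (nhdsWithin 0 (Set.Ioi 0)) (nhds 0) := by
      refine squeeze_zero_norm' (a := fun y => 30 * C ^ 2 * y) ?_ ?_
      · filter_upwards [Ioc_mem_nhdsGT (zero_lt_one (α := ℝ))] with y hy using bW y hy
      · have : Continuous fun y : ℝ => 30 * C ^ 2 * y := by fun_prop
        have h := this.tendsto 0
        simp only [mul_zero] at h
        exact h.mono_left nhdsWithin_le_nhds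
    have lV : Filter.Tendsto V (nhdsWithin 0 (Set.Ioi 0)) (nhds 0) := by
      have cP : Continuous P := continuous_iff_continuousAt.mpr fun y => (DP y).continuousAt
      have : Continuous V := (cP.abs.rpow_const (fun _ => Or.inr hn2.le)).mul
        (continuous_id.rpow_const (fun _ => Or.inr h0.le))
      have h := this.tendsto 0
      have e : V 0 = 0 := by simp [hV, Real.zero_rpow h0.ne']
      rw [e] at h
      exact h.mono_left nhdsWithin_le_nhds
    have := lW.add (lV.const_mul (β / (2 - n)))
    simpa using this
  -- f is monotone on (0, L]
  have fmono : ∀ x y, 0 < x → x ≤ y → f x ≤ f y := by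
    intro x y hx hxy
    refine mono_of_deriv (a := x) (b := y) (fun z hz => Df z (hx.trans_le hz.1)) (fun z hz => ?_)
      ⟨le_rfl, hxy⟩ ⟨hxy, le_rfl⟩ hxy
    have hz0 : 0 < z := hx.trans_le hz.1
    exact le_trans (by positivity) (f'lb z hz0)
  have fnn : ∀ y, 0 < y → 0 ≤ f y := by
    intro y hy
    refine le_of_tendsto lim0 ?_
    filter_upwards [Ioc_mem_nhdsGT hy] with x hx using fmono x y hx.1 hx.2
  have hA2z : ∀ y ∈ Set.Ioo 0 L, A2 y = 0 := by
    intro y hy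
    have k := deriv_zero_of_ends (a := y / 2) (b := L) (f := f) (f' := f')
      (fun z hz => Df z (by linarith [hz.1, hy.1])) (fun z hz => by
        have hz0 : 0 < z := by linarith [hz.1, hy.1]
        exact le_trans (by positivity) (f'lb z hz0)) (by
        rw [fL]; exact fnn _ (by linarith [hy.1])) y ⟨by linarith [hy.1], hy.2⟩
    have := f'lb y hy.1
    rw [k] at this
    have h3 : y * A2 y ^ 2 = 0 :=
      le_antisymm this (mul_nonneg hy.1.le (sq_nonneg _))
    exact (pow_eq_zero_iff two_ne_zero).mp ((mul_eq_zero.mp h3).resolve_left hy.1.ne')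
  have constL : ∀ {u u' : ℝ → ℝ}, (∀ y, 0 < y → HasDerivAt u (u' y) y) →
      (∀ y ∈ Set.Ioo 0 L, u' y = 0) → u L = 0 → ∀ y ∈ Set.Ioo 0 L, u y = 0 := by
    intro u u' hu hu0 huL y hy
    by_contra hne
    obtain ⟨c, hc, hc2⟩ := exists_hasDerivAt_eq_slope u u' hy.2
      (fun z hz => (hu z (hy.1.trans_le hz.1)).continuousAt.continuousWithinAt)
      (fun z hz => hu z (hy.1.trans hz.1))
    rw [hu0 c ⟨hy.1.trans hc.1, hc.2⟩, huL, eq_comm, div_eq_zero_iff] at hc2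
    rcases hc2 with h | h
    · apply hne; linarith
    · linarith [hy.2]
  have AL : A L = 0 := by simp [hA, PL]
  have A1z := constL DA1 hA2z (by simp [hA1, AL, l0])
  have Az := constL DA A1z AL
  intro y hy
  have a := A1z y hy
  have b := Az y hy
  simp only [hA1] at a
  rw [b, sub_zero, div_eq_zero_iff] at a
  exact a.resolve_right hy.1.ne'

end CPS

namespace CPS

/-- `F''' = β y φ(F)` on `[0,1]`. -/
structure IsSol01 (n β : ℝ) (F F1 F2 : ℝ → ℝ) : Prop where
  d0 : ∀ y, HasDerivAt F (F1 y) y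
  d1 : ∀ y, HasDerivAt F1 (F2 y) y
  d2 : ∀ y ∈ Set.Icc (0:ℝ) 1, HasDerivAt F2 (β * y * phi n (F y)) y

/-- The energy. -/
noncomputable def en (F F1 F2 : ℝ → ℝ) (y : ℝ) : ℝ := F1 y * F1 y / 2 - F y * F2 y

lemma IsSol01.den {n β : ℝ} {F F1 F2 : ℝ → ℝ} (h1 : n < 1) (h : IsSol01 n β F F1 F2) {y : ℝ}
    (hy : y ∈ Set.Icc (0:ℝ) 1) :
    HasDerivAt (en F F1 F2) (-(β * y * |F y| ^ (2 - n))) y := by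
  have := (((h.d1 y).mul (h.d1 y)).div_const 2).sub ((h.d0 y).mul (h.d2 y hy))
  refine this.congr_deriv ?_
  rw [← mul_phi h1]
  ring

lemma IsSol01.en_anti {n β : ℝ} {F F1 F2 : ℝ → ℝ} (h1 : n < 1) (hβ : 0 < β)
    (h : IsSol01 n β F F1 F2) : AntitoneOn (en F F1 F2) (Set.Icc 0 1) := by
  refine anti_of_deriv (fun y hy => h.den h1 hy) (fun y hy => ?_)
  have := hy.1
  have : 0 ≤ |F y| ^ (2 - n) := Real.rpow_nonneg (abs_nonneg _) _
  have : 0 ≤ β * y * |F y| ^ (2 - n) := by positivity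
  linarith

set_option maxHeartbeats 2000000 in
lemma step {n β : ℝ} (h1 : n < 1) (hβ : 0 < β)
    {F F1 F2 : ℝ → ℝ} (h : IsSol01 n β F F1 F2) {r l s σ : ℝ} (hr : 1 / 2 ≤ r) (hl : 0 < l)
    (hrl : r + l ≤ 1) (hs : 0 < s) (hσ : 0 < σ)
    (hrel : (l * s) ^ (2 - n) * (β * l) = 14 * s ^ 2)
    (hD : en F F1 F2 r - en F F1 F2 (r + l) ≤ σ ^ (2 - n) * s ^ 2) :
    en F F1 F2 (r + l) ≤ 10 ^ 5 * (σ * s + 15 * (σ ^ (1 - n) * s)) ^ 2 := by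
  set e := en F F1 F2 with he
  set D := σ ^ (2 - n) * s ^ 2 with hDdef
  set S := σ * (l * s) with hS
  have hSpos : 0 < S := by positivity
  have hDpos : 0 < D := by positivity
  have sub01 : ∀ {y}, y ∈ Set.Icc r (r + l) → y ∈ Set.Icc (0:ℝ) 1 := fun hy =>
    ⟨by linarith [hy.1], by linarith [hy.2]⟩
  have anti := h.en_anti h1 hβ
  have hSp : β * l * S ^ (2 - n) = 14 * D := by
    rw [hS, Real.mul_rpow hσ.le (by positivity), hDdef]
    linear_combination (σ ^ (2 - n)) * hrel
  have hS1 : S ^ (2 - n) = S ^ (1 - n) * S := by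
    rw [← Real.rpow_add_one hSpos.ne']; ring_nf
  have ediff : ∀ x ∈ Set.Icc r (r + l), ∀ z ∈ Set.Icc r (r + l), e x - e z ≤ D := by
    intro x hx z hz
    have a := anti (sub01 (Set.left_mem_Icc.mpr (by linarith))) (sub01 hx) hx.1
    have b := anti (sub01 hz) (sub01 (Set.right_mem_Icc.mpr (by linarith))) hz.2
    linarith
  -- points where F is small
  have pts : ∀ u v, r ≤ u → v ≤ r + l → v - u = l / 7 → ∃ ξ ∈ Set.Ioo u v, |F ξ| ≤ S := by
    intro u v hu hv huv
    have huv' : u < v := by linarith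
    obtain ⟨ξ, hξ, hξ2⟩ := exists_hasDerivAt_eq_slope e (fun y => -(β * y * |F y| ^ (2 - n))) huv'
      (fun z hz => (h.den h1 (sub01 ⟨hu.trans hz.1, hz.2.trans hv⟩)).continuousAt.continuousWithinAt)
      (fun z hz => h.den h1 (sub01 ⟨hu.trans hz.1.le, hz.2.le.trans hv⟩))
    refine ⟨ξ, hξ, ?_⟩
    rw [huv] at hξ2
    have hd := ediff u ⟨hu, by linarith⟩ v ⟨by linarith, hv⟩
    have e1 : β * ξ * |F ξ| ^ (2 - n) * (l / 7) = e u - e v := by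
      have : -(β * ξ * |F ξ| ^ (2 - n)) * (l / 7) = e v - e u := by
        rw [hξ2]; field_simp
      linarith
    have nn : 0 ≤ |F ξ| ^ (2 - n) := Real.rpow_nonneg (abs_nonneg _) _
    have hξh : 1 / 2 ≤ ξ := by linarith [hξ.1]
    have e2 : β * l * |F ξ| ^ (2 - n) ≤ β * l * S ^ (2 - n) := by
      rw [hSp]
      have : 0 ≤ β * l * |F ξ| ^ (2 - n) := by positivity
      nlinarith
    have e3 := le_of_mul_le_mul_left e2 (by positivity)
    exact (Real.rpow_le_rpow_iff (abs_nonneg _) hSpos.le (by linarith)).mp e3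
  obtain ⟨x1, hx1, bx1⟩ := pts r (r + l / 7) le_rfl (by linarith) (by ring)
  obtain ⟨x2, hx2, bx2⟩ := pts (r + 2 * l / 7) (r + 3 * l / 7) (by linarith) (by linarith) (by ring)
  obtain ⟨x3, hx3, bx3⟩ := pts (r + 4 * l / 7) (r + 5 * l / 7) (by linarith) (by linarith) (by ring)
  obtain ⟨x4, hx4, bx4⟩ := pts (r + 6 * l / 7) (r + l) (by linarith) le_rfl (by ring)
  have slope : ∀ (f f' : ℝ → ℝ), (∀ y, HasDerivAt f (f' y) y) → ∀ x z M, z - x ≥ l / 7 →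
      |f x| ≤ M → |f z| ≤ M → ∃ ξ ∈ Set.Ioo x z, |f' ξ| ≤ 14 * M / l := by
    intro f f' hf x z M hxz hx hz
    obtain ⟨ξ, hξ, hξ2⟩ := exists_hasDerivAt_eq_slope f f' (by linarith : x < z)
      (fun y _ => (hf y).continuousAt.continuousWithinAt) (fun y _ => hf y)
    refine ⟨ξ, hξ, ?_⟩
    have hpos : 0 < z - x := by linarith
    have hM : 0 ≤ M := (abs_nonneg _).trans hx
    rw [hξ2, abs_div, abs_of_pos hpos, div_le_div_iff₀ hpos hl]
    have : |f z - f x| ≤ 2 * M := (abs_sub _ _).trans (by linarith)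
    calc |f z - f x| * l ≤ 2 * M * l := by gcongr
      _ ≤ 14 * M * (z - x) := by nlinarith
  obtain ⟨η1, hη1, bη1⟩ := slope F F1 h.d0 x1 x2 S (by linarith [hx1.2, hx2.1]) bx1 bx2
  obtain ⟨η2, hη2, bη2⟩ := slope F F1 h.d0 x3 x4 S (by linarith [hx3.2, hx4.1]) bx3 bx4
  obtain ⟨ζ, hζ, bζ⟩ := slope F1 F2 h.d1 η1 η2 (14 * S / l)
    (by linarith [hη1.2, hη2.1, hx2.2, hx3.1]) bη1 bη2
  set a := σ * s with ha
  set b := 15 * (σ ^ (1 - n) * s) with hb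
  have hSa : S = l * a := by rw [hS, ha]; ring
  have ha0 : 0 < a := by positivity
  have hb0 : 0 < b := by positivity
  have hDS : 15 * D / S = b / l := by
    have : σ ^ (2 - n) = σ ^ (1 - n) * σ := by
      rw [← Real.rpow_add_one hσ.ne']; ring_nf
    rw [hDdef, hS, hb, this]; field_simp
  -- oscillation of F2
  have C1l : β * S ^ (1 - n) * l = 14 * D / S := by
    rw [eq_div_iff hSpos.ne', ← hSp, hS1]; ring
  have dom : ∀ y ∈ Set.Icc r (r + l), |β * y * phi n (F y)| ≤
      β * S ^ (1 - n) + β * y * |F y| ^ (2 - n) / S := by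
    intro y hy
    have hy01 := sub01 hy
    have c : |phi n (F y)| ≤ S ^ (1 - n) + |F y| ^ (2 - n) / S := by
      have nn : 0 ≤ |F y| ^ (2 - n) / S := div_nonneg (Real.rpow_nonneg (abs_nonneg _) _) hSpos.le
      rcases le_total |F y| S with hc | hc
      · have := abs_phi_le h1 hc
        linarith
      · have : |phi n (F y)| ≤ |F y| ^ (2 - n) / S := by
          rw [le_div_iff₀ hSpos, ← mul_phi h1]
          have e : F y * phi n (F y) = |F y| * |phi n (F y)| := by
            rw [← abs_mul, mul_phi h1, abs_of_nonneg (Real.rpow_nonneg (abs_nonneg _) _)]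
          rw [e, mul_comm]
          exact mul_le_mul_of_nonneg_right hc (abs_nonneg _)
        have : 0 ≤ S ^ (1 - n) := by positivity
        linarith
    rw [abs_mul, abs_of_nonneg (mul_nonneg hβ.le hy01.1)]
    have hby : β * y ≤ β := by nlinarith [hy01.2]
    calc _ ≤ β * y * (S ^ (1 - n) + |F y| ^ (2 - n) / S) :=
          mul_le_mul_of_nonneg_left c (mul_nonneg hβ.le hy01.1)
      _ = β * y * S ^ (1 - n) + β * y * |F y| ^ (2 - n) / S := by ring
      _ ≤ _ := by
        have : β * y * S ^ (1 - n) ≤ β * S ^ (1 - n) :=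
          mul_le_mul_of_nonneg_right hby (by positivity)
        linarith
  have m1 : AntitoneOn (fun y => F2 y + e y / S - β * S ^ (1 - n) * y) (Set.Icc r (r + l)) := by
    refine anti_of_deriv (f' := fun y => β * y * phi n (F y) + (-(β * y * |F y| ^ (2 - n))) / S
      - β * S ^ (1 - n) * 1) (fun y hy => ?_) (fun y hy => ?_)
    · exact ((h.d2 y (sub01 hy)).add ((h.den h1 (sub01 hy)).div_const S)).sub
        ((hasDerivAt_id y).const_mul _)
    · have := (abs_le.mp (dom y hy)).2
      rw [neg_div]
      linarith
  have m2 : MonotoneOn (fun y => F2 y - e y / S + β * S ^ (1 - n) * y) (Set.Icc r (r + l)) := by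
    refine mono_of_deriv (f' := fun y => β * y * phi n (F y) - (-(β * y * |F y| ^ (2 - n))) / S
      + β * S ^ (1 - n) * 1) (fun y hy => ?_) (fun y hy => ?_)
    · exact ((h.d2 y (sub01 hy)).sub ((h.den h1 (sub01 hy)).div_const S)).add
        ((hasDerivAt_id y).const_mul _)
    · have := (abs_le.mp (dom y hy)).1
      rw [neg_div]
      linarith
  have osc0 : ∀ x ∈ Set.Icc r (r + l), ∀ z ∈ Set.Icc r (r + l), x ≤ z →
      |F2 z - F2 x| ≤ b / l := by
    intro x hx z hz hxz
    have p1 := m1 hx hz hxz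
    have p2 := m2 hx hz hxz
    simp only at p1 p2
    have p3 : e x / S - e z / S ≤ D / S := by
      rw [← sub_div]; exact div_le_div_of_nonneg_right (ediff x hx z hz) hSpos.le
    have p4 : β * S ^ (1 - n) * z - β * S ^ (1 - n) * x ≤ 14 * D / S := by
      rw [← C1l, ← mul_sub]
      have : z - x ≤ l := by linarith [hx.1, hz.2]
      gcongr
    have p5 : b / l = D / S + 14 * D / S := by rw [← hDS]; ring
    rw [abs_le, p5]
    constructor <;> linarith
  have osc : ∀ x ∈ Set.Icc r (r + l), ∀ z ∈ Set.Icc r (r + l), |F2 z - F2 x| ≤ b / l := by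
    intro x hx z hz
    rcases le_total x z with hxz | hxz
    · exact osc0 x hx z hz hxz
    · rw [abs_sub_comm]; exact osc0 z hz x hx hxz
  have mη1 : η1 ∈ Set.Icc r (r + l) :=
    ⟨by linarith [hη1.1, hx1.1], by linarith [hη1.2, hx2.2]⟩
  have mη2 : η2 ∈ Set.Icc r (r + l) :=
    ⟨by linarith [hη2.1, hx3.1], by linarith [hη2.2, hx4.2]⟩
  have mζ : ζ ∈ Set.Icc r (r + l) := ⟨by linarith [hζ.1, mη1.1], by linarith [hζ.2, mη2.2]⟩
  have mx1 : x1 ∈ Set.Icc r (r + l) := ⟨by linarith [hx1.1], by linarith [hx1.2]⟩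
  have B2 : ∀ x ∈ Set.Icc r (r + l), |F2 x| ≤ (196 * a + b) / l := by
    intro x hx
    have := osc ζ mζ x hx
    have q : 14 * (14 * S / l) / l = 196 * a / l := by rw [hSa]; field_simp; norm_num
    rw [q] at bζ
    have t : |F2 x| ≤ |F2 x - F2 ζ| + |F2 ζ| := by
      have := abs_add_le (F2 x - F2 ζ) (F2 ζ); simpa using this
    rw [add_div]; linarith
  have prop : ∀ (f f' : ℝ → ℝ), (∀ y, HasDerivAt f (f' y) y) → ∀ M, 0 ≤ M →
      (∀ x ∈ Set.Icc r (r + l), |f' x| ≤ M) → ∀ z ∈ Set.Icc r (r + l), ∀ x ∈ Set.Icc r (r + l),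
      |f x| ≤ |f z| + l * M := by
    intro f f' hf M hM hb z hz x hx
    have := Convex.norm_image_sub_le_of_norm_hasDerivWithin_le (f := f) (f' := f') (C := M)
      (fun y _ => (hf y).hasDerivWithinAt) hb (convex_Icc r (r + l)) hz hx
    simp only [Real.norm_eq_abs] at this
    have t : |f x| ≤ |f x - f z| + |f z| := by
      have := abs_add_le (f x - f z) (f z); simpa using this
    have d : |x - z| ≤ l := by
      rw [abs_le]; constructor <;> linarith [hx.1, hx.2, hz.1, hz.2]
    have : M * |x - z| ≤ M * l := mul_le_mul_of_nonneg_left d hM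
    linarith
  have B1 : ∀ x ∈ Set.Icc r (r + l), |F1 x| ≤ 210 * a + b := by
    intro x hx
    have := prop F1 F2 h.d1 _ (by positivity) B2 η1 mη1 x hx
    have q : 14 * S / l = 14 * a := by rw [hSa]; field_simp
    rw [q] at bη1
    have q2 : l * ((196 * a + b) / l) = 196 * a + b := by field_simp
    linarith
  have B0 : ∀ x ∈ Set.Icc r (r + l), |F x| ≤ l * (211 * a + b) := by
    intro x hx
    have := prop F F1 h.d0 _ (by positivity) B1 x1 mx1 x hx
    rw [hSa] at bx1
    linarith
  have mr : r + l ∈ Set.Icc r (r + l) := ⟨by linarith, le_rfl⟩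
  have c2 := B2 _ mr
  have c1 := B1 _ mr
  have c0 := B0 _ mr
  have f1 : F1 (r + l) * F1 (r + l) ≤ (210 * a + b) * (210 * a + b) := by
    rw [← abs_mul_abs_self]; gcongr
  have f2 : - (F (r + l) * F2 (r + l)) ≤ (211 * a + b) * (196 * a + b) := by
    calc - (F (r + l) * F2 (r + l)) ≤ |F (r + l) * F2 (r + l)| := neg_le_abs _
      _ = |F (r + l)| * |F2 (r + l)| := abs_mul _ _
      _ ≤ (l * (211 * a + b)) * ((196 * a + b) / l) := by gcongr
      _ = _ := by field_simp
  have : e (r + l) = F1 (r + l) * F1 (r + l) / 2 - F (r + l) * F2 (r + l) := rfl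
  rw [this]
  nlinarith [mul_pos ha0 hb0, mul_pos ha0 ha0, mul_pos hb0 hb0]

end CPS

namespace CPS

lemma decay {n β : ℝ} (h0 : 0 < n) (h1 : n < 1) (hβ : 0 < β) :
    ∃ C q : ℝ, 0 < C ∧ 0 < q ∧ q < 1 ∧ ∀ {F F1 F2 : ℝ → ℝ}, IsSol01 n β F F1 F2 → ∀ {r l : ℝ},
      1 / 2 ≤ r → 0 < en F F1 F2 r → l = C * (Real.sqrt (en F F1 F2 r)) ^ (n / (3 - n)) →
      r + l ≤ 1 → (Real.sqrt (en F F1 F2 (r + l))) ^ (n / (3 - n)) ≤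
        q * (Real.sqrt (en F F1 F2 r)) ^ (n / (3 - n)) := by
  have h3 : 0 < 3 - n := by linarith
  obtain ⟨σ, hσ0, hσ1, hσ⟩ : ∃ σ : ℝ, 0 < σ ∧ σ ≤ σ ^ (1 - n) ∧ σ ^ (1 - n) = 1 / 10 ^ 5 := by
    have e : ((1 / 10 ^ 5 : ℝ) ^ (1 / (1 - n))) ^ (1 - n) = 1 / 10 ^ 5 := by
      rw [← Real.rpow_mul (by positivity), one_div_mul_cancel (by linarith), Real.rpow_one]
    refine ⟨(1 / 10 ^ 5) ^ (1 / (1 - n)), by positivity, ?_, e⟩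
    rw [e]
    have := Real.rpow_le_rpow_of_exponent_ge (x := 1 / 10 ^ 5) (by positivity) (by norm_num)
      (show (1:ℝ) ≤ 1 / (1 - n) by rw [le_div_iff₀ (by linarith)]; linarith)
    rwa [Real.rpow_one] at this
  have hp : σ ^ (2 - n) = σ ^ (1 - n) * σ := by
    rw [← Real.rpow_add_one hσ0.ne']; ring_nf
  have hp0 : 0 < σ ^ (2 - n) := by positivity
  have hp1 : σ ^ (2 - n) ≤ 1 / 10 ^ 5 := by
    rw [hp, hσ]; rw [hσ] at hσ1; nlinarith
  set θ := 1 - σ ^ (2 - n) with hθ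
  have hθ0 : 1 / 2 ≤ θ := by norm_num at hp1; linarith
  have hθ1 : θ < 1 := by linarith
  refine ⟨(14 / β) ^ (1 / (3 - n)), (Real.sqrt θ) ^ (n / (3 - n)), by positivity,
    Real.rpow_pos_of_pos (Real.sqrt_pos.mpr (by linarith)) _, ?_, ?_⟩
  · refine Real.rpow_lt_one (Real.sqrt_nonneg _) ?_ (by positivity)
    rw [Real.sqrt_lt' one_pos]; linarith
  intro F F1 F2 h r l hr he hl hrl
  set s := Real.sqrt (en F F1 F2 r) with hs
  have hs0 : 0 < s := Real.sqrt_pos.mpr he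
  have hs2 : s ^ 2 = en F F1 F2 r := Real.sq_sqrt he.le
  have hl0 : 0 < l := by rw [hl]; positivity
  have hl3 : l ^ (3 - n) = 14 / β * s ^ n := by
    rw [hl, Real.mul_rpow (by positivity) (by positivity), ← Real.rpow_mul (by positivity),
      ← Real.rpow_mul hs0.le, one_div_mul_cancel h3.ne', div_mul_cancel₀ _ h3.ne', Real.rpow_one]
  have hrel : (l * s) ^ (2 - n) * (β * l) = 14 * s ^ 2 := by
    have e1 : l ^ (3 - n) = l ^ (2 - n) * l := by
      rw [← Real.rpow_add_one hl0.ne']; ring_nf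
    have e2 : s ^ 2 = s ^ n * s ^ (2 - n) := by
      rw [← Real.rpow_add hs0, ← Real.rpow_natCast]; norm_num
    rw [Real.mul_rpow hl0.le hs0.le, e2]
    have : l ^ (2 - n) * l = 14 / β * s ^ n := by rw [← e1, hl3]
    calc _ = β * s ^ (2 - n) * (l ^ (2 - n) * l) := by ring
      _ = _ := by rw [this]; field_simp
  have key : en F F1 F2 (r + l) ≤ θ * en F F1 F2 r := by
    by_contra hc
    push Not at hc
    have := step h1 hβ h hr hl0 hrl hs0 hσ0 hrel (by rw [hs2]; rw [hθ] at hc; linarith)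
    have b : σ * s + 15 * (σ ^ (1 - n) * s) ≤ 16 / 10 ^ 5 * s := by
      rw [hσ] at hσ1 ⊢; nlinarith
    have b0 : 0 ≤ σ * s + 15 * (σ ^ (1 - n) * s) := by positivity
    have b2 : (σ * s + 15 * (σ ^ (1 - n) * s)) ^ 2 ≤ (16 / 10 ^ 5 * s) ^ 2 := by gcongr
    have b3 : (16 / 10 ^ 5 * s) ^ 2 = 256 / 10 ^ 10 * en F F1 F2 r := by rw [mul_pow, hs2]; norm_num
    rw [b3] at b2
    norm_num at b2 this
    nlinarith
  have : Real.sqrt (en F F1 F2 (r + l)) ≤ Real.sqrt θ * s := by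
    rw [hs, ← Real.sqrt_mul (by linarith)]
    exact Real.sqrt_le_sqrt key
  calc _ ≤ (Real.sqrt θ * s) ^ (n / (3 - n)) :=
        Real.rpow_le_rpow (Real.sqrt_nonneg _) this (by positivity)
    _ = _ := Real.mul_rpow (Real.sqrt_nonneg _) hs0.le

lemma extinction {n β : ℝ} (h0 : 0 < n) (h1 : n < 1) (hβ : 0 < β) :
    ∃ η : ℝ, 0 < η ∧ ∀ {F F1 F2 : ℝ → ℝ}, IsSol01 n β F F1 F2 → F 1 = 0 → en F F1 F2 0 ≤ η →
      ∃ R, 0 < R ∧ R < 1 ∧ ∀ y ∈ Set.Ioo R 1, F y = 0 := by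
  obtain ⟨C, q, hC, hq0, hq1, hd⟩ := decay h0 h1 hβ
  set κ := n / (3 - n) with hκ
  have hκ0 : 0 < κ := div_pos h0 (by linarith)
  set Λ := C / (1 - q) with hΛ
  have hΛ0 : 0 < Λ := div_pos hC (by linarith)
  have hΛq : C + Λ * q = Λ := by
    have : 1 - q ≠ 0 := by linarith
    rw [hΛ]; field_simp; ring
  have hCΛ : C ≤ Λ := by nlinarith
  refine ⟨((1 / (4 * Λ)) ^ (1 / κ)) ^ 2, by positivity, ?_⟩
  intro F F1 F2 h hF1 hη
  have anti := h.en_anti h1 hβ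
  have en1 : 0 ≤ en F F1 F2 1 := by
    simp only [en, hF1]; nlinarith [mul_self_nonneg (F1 1)]
  have ennn : ∀ y ∈ Set.Icc (0:ℝ) 1, 0 ≤ en F F1 F2 y := fun y hy =>
    en1.trans (anti hy (by simp) hy.2)
  set w : ℝ → ℝ := fun y => (Real.sqrt (en F F1 F2 y)) ^ κ with hw
  have w0 : ∀ y, 0 ≤ w y := fun y => Real.rpow_nonneg (Real.sqrt_nonneg _) _
  have wc : ContinuousOn w (Set.Icc (1 / 2) 1) := by
    have : ContinuousOn (en F F1 F2) (Set.Icc (1 / 2) 1) := fun y hy =>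
      (h.den h1 ⟨by linarith [hy.1], hy.2⟩).continuousAt.continuousWithinAt
    exact (Real.continuous_sqrt.comp_continuousOn this).rpow_const (fun _ _ => Or.inr hκ0.le)
  have whalf : Λ * w (1 / 2) ≤ 1 / 4 := by
    have a : en F F1 F2 (1 / 2) ≤ ((1 / (4 * Λ)) ^ (1 / κ)) ^ 2 :=
      (anti (by norm_num) (by norm_num) (by norm_num)).trans hη
    have b : Real.sqrt (en F F1 F2 (1 / 2)) ≤ (1 / (4 * Λ)) ^ (1 / κ) :=
      Real.sqrt_le_iff.mpr ⟨by positivity, a⟩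
    have c : w (1 / 2) ≤ ((1 / (4 * Λ)) ^ (1 / κ)) ^ κ :=
      Real.rpow_le_rpow (Real.sqrt_nonneg _) b hκ0.le
    rw [← Real.rpow_mul (by positivity), one_div_mul_cancel hκ0.ne', Real.rpow_one] at c
    calc _ ≤ Λ * (1 / (4 * Λ)) := by gcongr
      _ = _ := by field_simp
  set R := 1 / 2 + Λ * w (1 / 2) with hR
  set K := Set.Icc (1 / 2 : ℝ) 1 ∩ (fun y => y + Λ * w y) ⁻¹' Set.Iic R with hK
  have Kc : IsClosed K :=
    ContinuousOn.preimage_isClosed_of_isClosed (continuousOn_id.add (continuousOn_const.mul wc))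
      isClosed_Icc isClosed_Iic
  have Kcomp : IsCompact K := isCompact_Icc.of_isClosed_subset Kc Set.inter_subset_left
  obtain ⟨r, hr, hrmax⟩ := Kcomp.exists_isGreatest
    ⟨1 / 2, ⟨by norm_num, by norm_num⟩, by simp [hR]⟩
  have hrR : r + Λ * w r ≤ R := hr.2
  have hr1 : r ≤ 3 / 4 := by nlinarith [w0 r]
  have hrh : 1 / 2 ≤ r := hr.1.1
  have er : en F F1 F2 r ≤ 0 := by
    by_contra hc
    push Not at hc
    have hwr : 0 < w r := Real.rpow_pos_of_pos (Real.sqrt_pos.mpr hc) _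
    have hl : r + C * w r ≤ 1 := by nlinarith
    have := hd h hrh hc (l := C * w r) rfl hl
    have m : r + C * w r ∈ K := by
      refine ⟨⟨by nlinarith, hl⟩, ?_⟩
      simp only [Set.mem_preimage, Set.mem_Iic]
      have t : Λ * w (r + C * w r) ≤ Λ * (q * w r) := mul_le_mul_of_nonneg_left this hΛ0.le
      have : C * w r + Λ * (q * w r) = Λ * w r := by linear_combination w r * hΛq
      linarith
    have := hrmax m
    nlinarith
  refine ⟨r, by linarith, by linarith, fun y hy => ?_⟩
  have hy01 : y ∈ Set.Icc (0:ℝ) 1 := ⟨by linarith [hy.1], hy.2.le⟩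
  have ev : en F F1 F2 =ᶠ[nhds y] fun _ => 0 := by
    filter_upwards [Ioo_mem_nhds hy.1 hy.2] with z hz
    have hz01 : z ∈ Set.Icc (0:ℝ) 1 := ⟨by linarith [hz.1], hz.2.le⟩
    have := anti ⟨by linarith, by linarith⟩ hz01 hz.1.le
    have := ennn z hz01
    linarith
  have dd := (h.den h1 hy01).unique ((hasDerivAt_const y (0:ℝ)).congr_of_eventuallyEq ev)
  have : 0 < y := by linarith [hy.1]
  have : |F y| ^ (2 - n) = 0 := by
    have : β * y ≠ 0 := by positivity
    have h2 : β * y * |F y| ^ (2 - n) = 0 := by linarith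
    exact (mul_eq_zero.mp h2).resolve_left this
  have := (Real.rpow_eq_zero (abs_nonneg _) (by linarith)).mp this
  exact abs_eq_zero.mp this

end CPS

namespace CPS

/-- Primitive vanishing at `0`. -/
noncomputable def prim (f : ℝ → ℝ) (y : ℝ) : ℝ := ∫ t in (0:ℝ)..y, f t

lemma prim_hasDeriv {f : ℝ → ℝ} (hf : Continuous f) (y : ℝ) : HasDerivAt (prim f) (f y) y :=
  (hf.integral_hasStrictDerivAt 0 y).hasDerivAt

lemma prim_cont {f : ℝ → ℝ} (hf : Continuous f) : Continuous (prim f) :=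
  continuous_iff_continuousAt.mpr fun y => (prim_hasDeriv hf y).continuousAt

lemma prim_zero (f : ℝ → ℝ) : prim f 0 = 0 := by simp [prim]

lemma prim_le {f : ℝ → ℝ} (hf : Continuous f) {M : ℝ} (hM : 0 ≤ M)
    (h : ∀ t ∈ Set.Icc (0:ℝ) 1, f t ≤ M) : ∀ y ∈ Set.Icc (0:ℝ) 1, prim f y ≤ M := by
  intro y hy
  have : prim f y ≤ ∫ _t in (0:ℝ)..y, M := by
    refine intervalIntegral.integral_mono_on hy.1 (hf.intervalIntegrable _ _)
      (continuous_const.intervalIntegrable _ _) (fun t ht => h t ⟨ht.1, ht.2.trans hy.2⟩)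
  rw [intervalIntegral.integral_const] at this
  simp only [sub_zero, smul_eq_mul] at this
  nlinarith [hy.2]

lemma prim_neg (f : ℝ → ℝ) (y : ℝ) : prim (fun t => - f t) y = - prim f y := by
  simp [prim]

lemma prim_ge {f : ℝ → ℝ} (hf : Continuous f) {m : ℝ} (hm : m ≤ 0)
    (h : ∀ t ∈ Set.Icc (0:ℝ) 1, m ≤ f t) : ∀ y ∈ Set.Icc (0:ℝ) 1, m ≤ prim f y := by
  intro y hy
  have := prim_le hf.neg (M := -m) (by linarith) (fun t ht => by have := h t ht; simp; linarith) y hy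
  have e : prim (-f) y = - prim f y := prim_neg f y
  linarith

lemma prim_abs {f : ℝ → ℝ} (hf : Continuous f) {M : ℝ}
    (h : ∀ t ∈ Set.Icc (0:ℝ) 1, |f t| ≤ M) : ∀ y ∈ Set.Icc (0:ℝ) 1, |prim f y| ≤ M := by
  intro y hy
  have hM : 0 ≤ M := (abs_nonneg _).trans (h y hy)
  exact abs_le.mpr ⟨prim_ge hf (by linarith) (fun t ht => (abs_le.mp (h t ht)).1) y hy,
    prim_le hf hM (fun t ht => (abs_le.mp (h t ht)).2) y hy⟩

lemma prim_congr {f g : ℝ → ℝ} {c : ℝ} (h : ∀ t ∈ Set.Icc (0:ℝ) c, f t = g t) :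
    ∀ y ∈ Set.Icc (0:ℝ) c, prim f y = prim g y := by
  intro y hy
  refine intervalIntegral.integral_congr (fun t ht => ?_)
  rw [Set.uIcc_of_le hy.1] at ht
  exact h t ⟨ht.1, ht.2.trans hy.2⟩

lemma prim_tendsto {f : ℕ → ℝ → ℝ} {g : ℝ → ℝ} {M : ℝ} (hf : ∀ k, Continuous (f k))
    (hM : ∀ k, ∀ t ∈ Set.Icc (0:ℝ) 1, |f k t| ≤ M)
    (h : ∀ t ∈ Set.Icc (0:ℝ) 1, Filter.Tendsto (fun k => f k t) Filter.atTop (nhds (g t))) :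
    ∀ y ∈ Set.Icc (0:ℝ) 1, Filter.Tendsto (fun k => prim (f k) y) Filter.atTop
      (nhds (prim g y)) := by
  intro y hy
  have sub : ∀ t, t ∈ Set.uIoc 0 y → t ∈ Set.Icc (0:ℝ) 1 := by
    intro t ht
    rw [Set.uIoc_of_le hy.1] at ht
    exact ⟨ht.1.le, ht.2.trans hy.2⟩
  refine intervalIntegral.tendsto_integral_filter_of_dominated_convergence (fun _ => M) ?_ ?_ ?_ ?_
  · exact Filter.Eventually.of_forall fun k => (hf k).aestronglyMeasurable
  · exact Filter.Eventually.of_forall fun k => Filter.Eventually.of_forall fun t ht => hM k t (sub t ht)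
  · exact continuous_const.intervalIntegrable _ _
  · exact Filter.Eventually.of_forall fun t ht => h t (sub t ht)

lemma prim_param {u : ℝ × ℝ → ℝ} (hu : Continuous u) :
    Continuous fun p : ℝ × ℝ => prim (fun t => u (p.1, t)) p.2 := by
  unfold prim
  refine intervalIntegral.continuous_parametric_intervalIntegral_of_continuous ?_ continuous_snd
  have : Continuous fun q : (ℝ × ℝ) × ℝ => u (q.1.1, q.2) := by fun_prop
  exact this

/-- Delayed source. -/
noncomputable def src (n β δ : ℝ) (u : ℝ → ℝ) (t : ℝ) : ℝ := β * t * phi n (u (max (t - δ) 0))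

lemma src_cont {n β δ : ℝ} (h1 : n < 1) {u : ℝ → ℝ} (hu : Continuous u) :
    Continuous (src n β δ u) := by
  have : Continuous fun t => phi n (u (max (t - δ) 0)) := (phi_cont h1).comp (by fun_prop)
  unfold src
  fun_prop

/-- Iterates for the delayed problem. -/
noncomputable def itr (n β δ ε a : ℝ) : ℕ → ℝ → ℝ
  | 0 => fun _ => ε
  | j + 1 => fun y => ε - a * y ^ 2 / 2 + prim (prim (prim (src n β δ (itr n β δ ε a j)))) y

lemma itr_cont2 {n β δ ε : ℝ} (h1 : n < 1) (j : ℕ) :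
    Continuous fun p : ℝ × ℝ => itr n β δ ε p.1 j p.2 := by
  induction j with
  | zero => exact continuous_const
  | succ j ih =>
    have c0 : Continuous fun p : ℝ × ℝ => src n β δ (itr n β δ ε p.1 j) p.2 := by
      have e1 : Continuous fun p : ℝ × ℝ => itr n β δ ε p.1 j (max (p.2 - δ) 0) :=
        ih.comp (show Continuous fun p : ℝ × ℝ => (p.1, max (p.2 - δ) 0) by fun_prop)
      have := (phi_cont h1).comp e1
      simp only [Function.comp_def] at this
      unfold src
      fun_prop
    have c1 := prim_param c0
    have c2 := prim_param c1
    have c3 := prim_param c2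
    simp only [itr]
    have : Continuous fun p : ℝ × ℝ => ε - p.1 * p.2 ^ 2 / 2 := by fun_prop
    exact this.add c3

lemma itr_cont {n β δ ε : ℝ} (h1 : n < 1) (a : ℝ) (j : ℕ) : Continuous (itr n β δ ε a j) :=
  (itr_cont2 (n := n) (β := β) (δ := δ) (ε := ε) h1 j).comp (Continuous.prodMk_right a)

lemma delay_mem {δ t : ℝ} (hδ : 0 ≤ δ) (ht : t ∈ Set.Icc (0:ℝ) 1) :
    max (t - δ) 0 ∈ Set.Icc (0:ℝ) 1 :=
  ⟨le_max_right _ _, max_le (by linarith [ht.2]) (by norm_num)⟩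

lemma src_le {n β δ X : ℝ} (h1 : n < 1) (hβ : 0 < β) (hβ1 : β ≤ 1) (hδ : 0 ≤ δ) (hX : 0 ≤ X)
    {u : ℝ → ℝ} (hu : ∀ t ∈ Set.Icc (0:ℝ) 1, u t ≤ X) :
    ∀ t ∈ Set.Icc (0:ℝ) 1, src n β δ u t ≤ X ^ (1 - n) := by
  intro t ht
  have := phi_le h1 hX (hu _ (delay_mem hδ ht))
  have p : 0 ≤ X ^ (1 - n) := by positivity
  have b0 : 0 ≤ β * t := mul_nonneg hβ.le ht.1
  have b1 : β * t ≤ 1 := mul_le_one₀ hβ1 ht.1 ht.2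
  unfold src
  calc _ ≤ β * t * X ^ (1 - n) := by gcongr
    _ ≤ _ := by nlinarith

lemma src_abs {n β δ X : ℝ} (h1 : n < 1) (hβ : 0 < β) (hβ1 : β ≤ 1) (hδ : 0 ≤ δ)
    {u : ℝ → ℝ} (hu : ∀ t ∈ Set.Icc (0:ℝ) 1, |u t| ≤ X) :
    ∀ t ∈ Set.Icc (0:ℝ) 1, |src n β δ u t| ≤ X ^ (1 - n) := by
  intro t ht
  have := abs_phi_le h1 (hu _ (delay_mem hδ ht))
  have p : 0 ≤ X ^ (1 - n) := (abs_nonneg _).trans this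
  have b0 : 0 ≤ β * t := mul_nonneg hβ.le ht.1
  have b1 : β * t ≤ 1 := mul_le_one₀ hβ1 ht.1 ht.2
  unfold src
  rw [abs_mul, abs_of_nonneg b0]
  calc _ ≤ β * t * X ^ (1 - n) := by gcongr
    _ ≤ _ := by nlinarith

lemma itr_upper {n β δ ε : ℝ} (h1 : n < 1) (hβ : 0 < β) (hβ1 : β ≤ 1) (hδ : 0 ≤ δ)
    (hε1 : ε ≤ 1) {a B : ℝ} (ha : 0 ≤ a) (hB : 1 ≤ B) (hB2 : 1 + B ^ (1 - n) ≤ B) (j : ℕ) :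
    (∀ y ∈ Set.Icc (0:ℝ) 1, itr n β δ ε a j y ≤ B) ∧ itr n β δ ε a (j + 1) 1 ≤ B - a / 2 := by
  have aux : ∀ j, (∀ y ∈ Set.Icc (0:ℝ) 1, itr n β δ ε a j y ≤ B) →
      ∀ y ∈ Set.Icc (0:ℝ) 1, itr n β δ ε a (j + 1) y ≤ B - a * y ^ 2 / 2 := by
    intro j ih y hy
    have c := src_cont (β := β) (δ := δ) h1 (itr_cont (n := n) (β := β) (δ := δ) (ε := ε) h1 a j)
    have p : 0 ≤ B ^ (1 - n) := by positivity
    have := prim_le (prim_cont (prim_cont c)) p (prim_le (prim_cont c) p (prim_le c p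
      (src_le h1 hβ hβ1 hδ (by linarith) ih))) y hy
    simp only [itr]
    linarith
  have main : ∀ j, ∀ y ∈ Set.Icc (0:ℝ) 1, itr n β δ ε a j y ≤ B := by
    intro j
    induction j with
    | zero => intro y hy; simp only [itr]; linarith
    | succ j ih =>
      intro y hy
      have := aux j ih y hy
      have : 0 ≤ a * y ^ 2 / 2 := by positivity
      linarith
  refine ⟨main j, ?_⟩
  have := aux j (main j) 1 (by simp)
  simpa using this

lemma itr_lower {n β δ ε : ℝ} (h1 : n < 1) (hβ : 0 < β) (hδ : 0 ≤ δ) (hε : 0 < ε) (j : ℕ) : ∀ y ∈ Set.Icc (0:ℝ) 1, ε ≤ itr n β δ ε 0 j y := by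
  induction j with
  | zero => intro y hy; simp [itr]
  | succ j ih =>
    intro y hy
    have c := src_cont (β := β) (δ := δ) h1 (itr_cont (n := n) (β := β) (δ := δ) (ε := ε) h1 0 j)
    have := prim_ge (prim_cont (prim_cont c)) le_rfl (prim_ge (prim_cont c) le_rfl (prim_ge c le_rfl
      (fun t ht => ?_))) y hy
    · simp only [itr]; linarith
    · have := phi_nonneg (n := n) (hε.le.trans (ih _ (delay_mem hδ ht)))
      exact mul_nonneg (mul_nonneg hβ.le ht.1) this

lemma itr_abs {n β δ ε : ℝ} (h1 : n < 1) (hβ : 0 < β) (hβ1 : β ≤ 1) (hδ : 0 ≤ δ)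
    (hε : 0 < ε) (hε1 : ε ≤ 1) {a A X : ℝ} (ha : 0 ≤ a) (haA : a ≤ 2 * A) (hX : 1 + A + X ^ (1 - n) ≤ X)
    (hX1 : 1 ≤ X) (j : ℕ) : ∀ y ∈ Set.Icc (0:ℝ) 1, |itr n β δ ε a j y| ≤ X := by
  induction j with
  | zero => intro y hy; simp only [itr]; rw [abs_of_pos hε]; linarith
  | succ j ih =>
    intro y hy
    have c := src_cont (β := β) (δ := δ) h1 (itr_cont (n := n) (β := β) (δ := δ) (ε := ε) h1 a j)
    have := abs_le.mp (prim_abs (prim_cont (prim_cont c)) (prim_abs (prim_cont c) (prim_abs c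
      (src_abs h1 hβ hβ1 hδ ih))) y hy)
    have y1 : y ^ 2 ≤ 1 := pow_le_one₀ hy.1 hy.2
    have y0 : 0 ≤ a * y ^ 2 / 2 := by positivity
    have y2 : a * y ^ 2 / 2 ≤ A := by nlinarith
    simp only [itr]
    rw [abs_le]
    constructor <;> linarith [this.1, this.2]

lemma itr_stab {n β δ ε : ℝ} (hδ : 0 ≤ δ) (a : ℝ) (j : ℕ) : ∀ y ∈ Set.Icc (0:ℝ) (j * δ),
    itr n β δ ε a (j + 1) y = itr n β δ ε a j y := by
  induction j with
  | zero =>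
    intro y hy
    have : y = 0 := le_antisymm (by simpa using hy.2) hy.1
    subst this
    simp [itr, prim_zero]
  | succ j ih =>
    intro y hy
    push_cast at hy
    have s : ∀ t ∈ Set.Icc (0:ℝ) ((j + 1) * δ),
        src n β δ (itr n β δ ε a (j + 1)) t = src n β δ (itr n β δ ε a j) t := by
      intro t ht
      unfold src
      rw [ih]
      refine ⟨le_max_right _ _, max_le (by linarith [ht.2]) (by positivity)⟩
    have := prim_congr (prim_congr (prim_congr s)) y hy
    exact congrArg (fun z => ε - a * y ^ 2 / 2 + z) this

lemma itr_lip {n β δ ε : ℝ} (h1 : n < 1) (hβ : 0 < β) (hβ1 : β ≤ 1) (hδ : 0 ≤ δ)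
    (hε : 0 < ε) (hε1 : ε ≤ 1) {a A X : ℝ} (ha : 0 ≤ a) (haA : a ≤ 2 * A) (hX : 1 + A + X ^ (1 - n) ≤ X)
    (hX1 : 1 ≤ X) (j : ℕ) : ∀ y ∈ Set.Icc (0:ℝ) 1, ∀ z ∈ Set.Icc (0:ℝ) 1,
    |itr n β δ ε a (j + 1) y - itr n β δ ε a (j + 1) z| ≤ (2 * A + X) * |y - z| := by
  intro y hy z hz
  have c := src_cont (β := β) (δ := δ) h1 (itr_cont (n := n) (β := β) (δ := δ) (ε := ε) h1 a j)
  have hb := prim_abs (prim_cont c) (prim_abs c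
      (src_abs h1 hβ hβ1 hδ (itr_abs h1 hβ hβ1 hδ hε hε1 ha haA hX hX1 j)))
  have hd : ∀ y, HasDerivAt (itr n β δ ε a (j + 1))
      (- (a * y) + prim (prim (src n β δ (itr n β δ ε a j))) y) y := by
    intro y
    have t : HasDerivAt (fun y : ℝ => ε - a * y ^ 2 / 2) (-(a * y)) y := by
      have := (((hasDerivAt_pow 2 y).const_mul a).div_const 2).const_sub ε
      refine this.congr_deriv ?_
      simp only [Nat.cast_ofNat]; ring
    exact t.add (prim_hasDeriv (prim_cont (prim_cont c)) y)
  have := Convex.norm_image_sub_le_of_norm_hasDerivWithin_le (C := 2 * A + X)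
      (fun x _ => (hd x).hasDerivWithinAt) (fun x hx => ?_) (convex_Icc (0:ℝ) 1) hz hy
  · simpa only [Real.norm_eq_abs] using this
  · rw [Real.norm_eq_abs, abs_le]
    have := abs_le.mp (hb x hx)
    have a1 : 0 ≤ a * x := mul_nonneg ha hx.1
    have a2 : a * x ≤ 2 * A := by nlinarith [hx.2]
    constructor <;> linarith [this.1, this.2]

end CPS

namespace CPS

lemma exists_const {n c : ℝ} (h0 : 0 < n) (h1 : n < 1) (hc : 1 ≤ c) :
    ∃ X : ℝ, 1 ≤ X ∧ c + X ^ (1 - n) ≤ X := by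
  have hX1 : 1 ≤ (1 + c) ^ (1 / n) := Real.one_le_rpow (by linarith) (by positivity)
  refine ⟨(1 + c) ^ (1 / n), hX1, ?_⟩
  set X := (1 + c) ^ (1 / n) with hX
  have e : X ^ n = 1 + c := by
    rw [hX, ← Real.rpow_mul (by linarith), one_div_mul_cancel h0.ne', Real.rpow_one]
  have e2 : X = (1 + c) * X ^ (1 - n) := by
    rw [← e, ← Real.rpow_add (by linarith)]; simp
  have : 1 ≤ X ^ (1 - n) := Real.one_le_rpow hX1 (by linarith)
  nlinarith

lemma delayed {n β : ℝ} (h0 : 0 < n) (h1 : n < 1) (hβ : 0 < β) (hβ1 : β ≤ 1) :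
    ∃ A X L : ℝ, 0 < A ∧ 0 ≤ L ∧ ∀ ε, 0 < ε → ε ≤ 1 → ∀ N : ℕ, ∃ a ∈ Set.Icc (0:ℝ) A, ∃ u : ℝ → ℝ,
      Continuous u ∧ u 1 = 0 ∧ (∀ y ∈ Set.Icc (0:ℝ) 1, |u y| ≤ X) ∧
      (∀ y ∈ Set.Icc (0:ℝ) 1, ∀ z ∈ Set.Icc (0:ℝ) 1, |u y - u z| ≤ L * |y - z|) ∧
      ∀ y ∈ Set.Icc (0:ℝ) 1,
        u y = ε - a * y ^ 2 / 2 + prim (prim (prim (src n β (1 / ((N : ℝ) + 1)) u))) y := by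
  obtain ⟨B, hB1, hB⟩ := exists_const h0 h1 le_rfl
  obtain ⟨X, hX1, hX⟩ := exists_const h0 h1 (show 1 ≤ 1 + B by linarith)
  refine ⟨2 * B, X, 2 * B + X, by linarith, by linarith, ?_⟩
  intro ε hε hε1 N
  set δ : ℝ := 1 / ((N : ℝ) + 1) with hδd
  have hδ : 0 ≤ δ := by positivity
  have cont : Continuous fun a => itr n β δ ε a (N + 1) 1 :=
    (itr_cont2 (n := n) (β := β) (δ := δ) (ε := ε) h1 (N + 1)).comp (Continuous.prodMk_left 1)
  have lo := itr_lower h1 hβ hδ hε (N + 1) 1 (by simp)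
  have hi := (itr_upper h1 hβ hβ1 hδ hε1 (a := 2 * B) (by linarith) hB1 hB N).2
  obtain ⟨a, ha, hau⟩ := intermediate_value_Icc' (show (0:ℝ) ≤ 2 * B by linarith) cont.continuousOn
    (show (0:ℝ) ∈ Set.Icc _ _ from ⟨by linarith, by linarith⟩)
  refine ⟨a, ha, itr n β δ ε a (N + 1), itr_cont h1 a _, hau,
    itr_abs h1 hβ hβ1 hδ hε hε1 ha.1 ha.2 hX hX1 _,
    itr_lip h1 hβ hβ1 hδ hε hε1 ha.1 ha.2 hX hX1 _, fun y hy => ?_⟩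
  have e : ((N + 1 : ℕ) : ℝ) * δ = 1 := by rw [hδd]; push_cast; field_simp
  rw [← itr_stab hδ a (N + 1) y (by rw [e]; exact hy)]
  rfl

lemma exist01 {n β : ℝ} (h0 : 0 < n) (h1 : n < 1) (hβ : 0 < β) (hβ1 : β ≤ 1) :
    ∃ A : ℝ, 0 < A ∧ ∀ ε, 0 < ε → ε ≤ 1 → ∃ a ∈ Set.Icc (0:ℝ) A, ∃ g : ℝ → ℝ,
      Continuous g ∧ (∀ t, g (-t) = g t) ∧ (∀ t, 1 ≤ t → g t = 0) ∧
      ∀ y ∈ Set.Icc (0:ℝ) 1,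
        g y = ε - a * y ^ 2 / 2 + prim (prim (prim (fun t => β * t * phi n (g t)))) y := by
  obtain ⟨A, X, L, hA, hL, hdel⟩ := delayed h0 h1 hβ hβ1
  refine ⟨A, hA, fun ε hε hε1 => ?_⟩
  choose a ha u uc u1 ub ul ue using hdel ε hε hε1
  let I := Set.Icc (0:ℝ) 1
  let v : ℕ → BoundedContinuousFunction I ℝ := fun N =>
    BoundedContinuousFunction.mkOfCompact ⟨fun x => u N x, (uc N).comp continuous_subtype_val⟩
  let S : Set (BoundedContinuousFunction I ℝ) :=
    {f | (∀ x, f x ∈ Set.Icc (-X) X) ∧ ∀ x z : I, |f x - f z| ≤ L * |(x:ℝ) - z|}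
  have Scl : IsClosed S := by
    have : S = (⋂ x : I, {f | f x ∈ Set.Icc (-X) X}) ∩
        ⋂ x : I, ⋂ z : I, {f : BoundedContinuousFunction I ℝ | |f x - f z| ≤ L * |(x:ℝ) - z|} := by
      ext f; simp [S]
    rw [this]
    refine IsClosed.inter (isClosed_iInter fun x => ?_)
      (isClosed_iInter fun x => isClosed_iInter fun z => ?_)
    · exact isClosed_Icc.preimage (BoundedContinuousFunction.lipschitz_eval_const x).continuous
    · have c1 : Continuous fun f : BoundedContinuousFunction I ℝ => f x :=
        (BoundedContinuousFunction.lipschitz_eval_const x).continuous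
      have c2 : Continuous fun f : BoundedContinuousFunction I ℝ => f z :=
        (BoundedContinuousFunction.lipschitz_eval_const z).continuous
      exact isClosed_le (c1.sub c2).abs continuous_const
  have Sc : IsCompact S := by
    refine BoundedContinuousFunction.arzela_ascoli₂ (Set.Icc (-X) X) isCompact_Icc S Scl
      (fun f x hf => hf.1 x) ?_
    refine Metric.equicontinuous_of_continuity_modulus (fun t => L * t) ?_ _ ?_
    · have : Filter.Tendsto (fun t : ℝ => L * t) (nhds 0) (nhds (L * 0)) :=
        (continuous_const.mul continuous_id).tendsto 0
      simpa using this
    · intro x z f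
      rw [Real.dist_eq, Subtype.dist_eq, Real.dist_eq]
      exact f.2.2 x z
  have vS : ∀ N, v N ∈ S := fun N =>
    ⟨fun x => abs_le.mp (ub N x x.2), fun x z => ul N x x.2 z z.2⟩
  obtain ⟨⟨f, a'⟩, hfa, ψ, hψ, hlim⟩ := (Sc.prod (isCompact_Icc (a := (0:ℝ)) (b := A))).tendsto_subseq
    (x := fun N => (v N, a N)) (fun N => ⟨vS N, ha N⟩)
  have hlimf : Filter.Tendsto (fun k => v (ψ k)) Filter.atTop (nhds f) :=
    (continuous_fst.tendsto _).comp hlim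
  have hlima : Filter.Tendsto (fun k => a (ψ k)) Filter.atTop (nhds a') :=
    (continuous_snd.tendsto _).comp hlim
  have hpt : ∀ x : I, Filter.Tendsto (fun k => u (ψ k) x) Filter.atTop (nhds (f x)) := fun x =>
    ((BoundedContinuousFunction.lipschitz_eval_const x).continuous.tendsto f).comp hlimf
  let g : ℝ → ℝ := fun t => f (Set.projIcc 0 1 zero_le_one |t|)
  have gI : ∀ t (ht : t ∈ Set.Icc (0:ℝ) 1), g t = f ⟨t, ht⟩ := by
    intro t ht
    simp only [g, abs_of_nonneg ht.1]
    rw [Set.projIcc_of_mem zero_le_one ht]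
  have gc : Continuous g := f.continuous.comp (continuous_projIcc.comp continuous_abs)
  have gpt : ∀ t ∈ Set.Icc (0:ℝ) 1, Filter.Tendsto (fun k => u (ψ k) t) Filter.atTop (nhds (g t)) := by
    intro t ht
    rw [gI t ht]
    exact hpt ⟨t, ht⟩
  have g1 : g 1 = 0 := by
    have := gpt 1 (by simp)
    simp only [u1] at this
    exact tendsto_nhds_unique this tendsto_const_nhds
  refine ⟨a', hfa.2, g, gc, fun t => by simp [g], fun t ht => ?_, fun y hy => ?_⟩
  · have : g t = g 1 := by
      simp only [g, abs_one, abs_of_nonneg (zero_le_one.trans ht)]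
      rw [Set.projIcc_of_right_le _ ht, Set.projIcc_of_right_le _ le_rfl]
    rw [this, g1]
  · have δpos : ∀ k : ℕ, 0 ≤ 1 / ((ψ k : ℝ) + 1) := fun k => by positivity
    have δlim : Filter.Tendsto (fun k => 1 / ((ψ k : ℝ) + 1)) Filter.atTop (nhds 0) :=
      (tendsto_one_div_add_atTop_nhds_zero_nat (𝕜 := ℝ)).comp hψ.tendsto_atTop
    have src_lim : ∀ t ∈ Set.Icc (0:ℝ) 1, Filter.Tendsto
        (fun k => src n β (1 / ((ψ k : ℝ) + 1)) (u (ψ k)) t) Filter.atTop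
        (nhds (β * t * phi n (g t))) := by
      intro t ht
      have d : Filter.Tendsto (fun k => u (ψ k) (max (t - 1 / ((ψ k : ℝ) + 1)) 0) - u (ψ k) t)
          Filter.atTop (nhds 0) := by
        refine squeeze_zero_norm (a := fun k => L * (1 / ((ψ k : ℝ) + 1))) (fun k => ?_) ?_
        · rw [Real.norm_eq_abs]
          refine (ul (ψ k) _ (delay_mem (δpos k) ht) t ht).trans ?_
          refine mul_le_mul_of_nonneg_left ?_ hL
          rw [abs_le]
          have := δpos k
          constructor
          · linarith [le_max_left (t - 1 / ((ψ k : ℝ) + 1)) 0]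
          · have : max (t - 1 / ((ψ k : ℝ) + 1)) 0 ≤ t := max_le (by linarith) ht.1
            linarith
        · simpa using δlim.const_mul L
      have := d.add (gpt t ht)
      simp only [sub_add_cancel, zero_add] at this
      exact (((phi_cont h1).tendsto _).comp this).const_mul (β * t)
    have sc : ∀ k, Continuous (src n β (1 / ((ψ k : ℝ) + 1)) (u (ψ k))) := fun k =>
      src_cont h1 (uc _)
    have sb : ∀ k, ∀ t ∈ Set.Icc (0:ℝ) 1, |src n β (1 / ((ψ k : ℝ) + 1)) (u (ψ k)) t| ≤ X ^ (1 - n) :=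
      fun k => src_abs h1 hβ hβ1 (δpos k) (ub _)
    have l1 := prim_tendsto sc sb src_lim
    have l2 := prim_tendsto (fun k => prim_cont (sc k)) (fun k => prim_abs (sc k) (sb k)) l1
    have l3 := prim_tendsto (fun k => prim_cont (prim_cont (sc k)))
      (fun k => prim_abs (prim_cont (sc k)) (prim_abs (sc k) (sb k))) l2 y hy
    have r := (((hlima.mul_const (y ^ 2)).div_const 2).const_sub ε).add l3
    refine tendsto_nhds_unique (gpt y hy) (r.congr fun k => ?_)
    exact (ue (ψ k) y hy).symm

lemma prim_odd_of_even {f : ℝ → ℝ} (hf : ∀ t, f (-t) = f t) (y : ℝ) :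
    prim f (-y) = - prim f y := by
  have := intervalIntegral.integral_comp_neg (a := 0) (b := -y) f
  simp only [neg_neg, neg_zero, hf] at this
  rw [prim, this, intervalIntegral.integral_symm, prim]

lemma prim_even_of_odd {f : ℝ → ℝ} (hf : ∀ t, f (-t) = - f t) (y : ℝ) :
    prim f (-y) = prim f y := by
  have := intervalIntegral.integral_comp_neg (a := 0) (b := -y) f
  simp only [neg_neg, neg_zero, hf, intervalIntegral.integral_neg] at this
  rw [prim, prim, intervalIntegral.integral_symm y 0] 
  linarith

lemma exist_global {n β : ℝ} (h0 : 0 < n) (h1 : n < 1) (hβ : 0 < β) (hβ1 : β ≤ 1) :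
    ∃ F F1 F2 : ℝ → ℝ, ∃ R : ℝ, IsSol n β F F1 F2 ∧ 0 < R ∧ (∀ y, R < |y| → F y = 0) ∧
      (∀ y, F (-y) = F y) ∧ F1 0 = 0 ∧ F 0 ≠ 0 := by
  obtain ⟨A, hA, hex⟩ := exist01 h0 h1 hβ hβ1
  obtain ⟨η, hη, hext⟩ := extinction h0 h1 hβ
  set ε := min 1 (η / A) with hε
  have ε0 : 0 < ε := lt_min one_pos (by positivity)
  obtain ⟨a, ha, g, gc, ge, g1, geq⟩ := hex ε ε0 (min_le_left _ _)
  set s : ℝ → ℝ := fun t => β * t * phi n (g t) with hs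
  have sc : Continuous s := by
    have := (phi_cont h1).comp gc
    simp only [Function.comp_def] at this
    fun_prop
  set F2 : ℝ → ℝ := fun y => -a + prim s y with hF2
  set F1 : ℝ → ℝ := fun y => -(a * y) + prim (prim s) y with hF1
  set F : ℝ → ℝ := fun y => ε - a * y ^ 2 / 2 + prim (prim (prim s)) y with hF
  have d2 : ∀ y, HasDerivAt F2 (s y) y := fun y => by
    exact (prim_hasDeriv sc y).const_add (-a)
  have d1 : ∀ y, HasDerivAt F1 (F2 y) y := fun y => by
    have := ((hasDerivAt_id y).const_mul a).neg.add (prim_hasDeriv (prim_cont sc) y)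
    refine this.congr_deriv ?_
    simp [hF2]
  have d0 : ∀ y, HasDerivAt F (F1 y) y := fun y => by
    have := ((((hasDerivAt_pow 2 y).const_mul a).div_const 2).const_sub ε).add
      (prim_hasDeriv (prim_cont (prim_cont sc)) y)
    refine this.congr_deriv ?_
    simp only [Nat.cast_ofNat, hF1]; ring
  have Fg : ∀ y ∈ Set.Icc (0:ℝ) 1, F y = g y := fun y hy => (geq y hy).symm
  have sol01 : IsSol01 n β F F1 F2 := ⟨d0, d1, fun y hy => by
    have := d2 y; simp only [hs] at this; rwa [Fg y hy]⟩
  have Feven : ∀ y, F (-y) = F y := by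
    intro y
    have sodd : ∀ t, s (-t) = - s t := fun t => by simp only [hs, ge]; ring
    have := prim_even_of_odd (prim_odd_of_even (prim_even_of_odd sodd)) y
    simp only [hF, this]; ring
  have F10 : F1 0 = 0 := by simp [hF1, prim_zero]
  have F0 : F 0 = ε := by simp [hF, prim_zero]
  have en0 : en F F1 F2 0 ≤ η := by
    have : F2 0 = -a := by simp [hF2, prim_zero]
    simp only [en, F10, F0, this]
    have h1 : ε * a ≤ η / A * A := mul_le_mul (min_le_right _ _) ha.2 ha.1 (by positivity)
    rw [div_mul_cancel₀ _ hA.ne'] at h1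
    linarith
  obtain ⟨R, hR0, hR1, hR⟩ := hext sol01 (by rw [Fg 1 (by simp), g1 1 le_rfl]) en0
  have gR : ∀ y, R < y → g y = 0 := by
    intro y hy
    rcases lt_or_ge y 1 with h | h
    · rw [← Fg y ⟨by linarith, h.le⟩]; exact hR y ⟨hy, h⟩
    · exact g1 y h
  -- vanishing past `R`
  have ext : ∀ (f f' : ℝ → ℝ), (∀ y, HasDerivAt f (f' y) y) → (∀ y, R < y → f' y = 0) →
      (∀ y ∈ Set.Ioo R 1, f y = 0) → ∀ y, R < y → f y = 0 := by
    intro f f' hd hz hl y hy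
    have hc := (convex_Ioi R).is_const_of_fderivWithin_eq_zero (𝕜 := ℝ) (f := f)
      (fun z _ => (hd z).differentiableAt.differentiableWithinAt) (fun z hz' => by
        have h' := ((hd z).hasFDerivAt.hasFDerivWithinAt (s := Set.Ioi R)).fderivWithin
          (isOpen_Ioi.uniqueDiffWithinAt hz')
        rw [h', hz z hz']; ext; simp) (show y ∈ Set.Ioi R from hy)
      (show (R + 1) / 2 ∈ Set.Ioi R by simp only [Set.mem_Ioi]; linarith)
    rw [hc]; exact hl _ ⟨by linarith, by linarith⟩
  have F1l := deriv_zero_of_ev d0 isOpen_Ioo hR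
  have F2l := deriv_zero_of_ev d1 isOpen_Ioo F1l
  have F2R := ext F2 s d2 (fun y hy => by simp [hs, gR y hy, phi_zero]) F2l
  have F1R := ext F1 F2 d1 F2R F1l
  have FR := ext F F1 d0 F1R hR
  have Fgp : ∀ y, 0 ≤ y → F y = g y := by
    intro y hy
    rcases le_or_gt y R with h | h
    · exact Fg y ⟨hy, by linarith⟩
    · rw [FR y h, gR y h]
  have Fgall : ∀ y, F y = g y := by
    intro y
    rcases le_total 0 y with h | h
    · exact Fgp y h
    · rw [← Feven, ← ge]; exact Fgp _ (by linarith)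
  refine ⟨F, F1, F2, R, ⟨d0, d1, fun y => by rw [Fgall]; exact d2 y⟩, hR0, ?_, Feven, F10, ?_⟩
  · intro y hy
    rcases le_total 0 y with h | h
    · rw [abs_of_nonneg h] at hy; exact FR y hy
    · rw [abs_of_nonpos h] at hy; rw [← Feven]; exact FR _ hy
  · rw [F0]; exact ε0.ne'

end CPS

namespace CPS

lemma IsSol.of_contDiff {n β : ℝ} (h1 : n < 1) {F : ℝ → ℝ} (hF : ContDiff ℝ 3 F)
    (he : ∀ y : ℝ, |F y| ^ n * deriv (deriv (deriv F)) y = β * y * F y) :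
    IsSol n β F (deriv F) (deriv (deriv F)) := by
  have c1 : ContDiff ℝ 2 (deriv F) := by
    have := (contDiff_succ_iff_deriv (n := 2) (f := F)).mp (by norm_num; exact hF)
    exact this.2.2
  have c2 : ContDiff ℝ 1 (deriv (deriv F)) := by
    have := (contDiff_succ_iff_deriv (n := 1) (f := deriv F)).mp (by norm_num; exact c1)
    exact this.2.2
  have c3 : Continuous (deriv (deriv (deriv F))) := (contDiff_one_iff_deriv.mp c2).2
  have d0 : ∀ y, HasDerivAt F (deriv F y) y := fun y =>
    ((hF.differentiable (by norm_num)) y).hasDerivAt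
  have d1 : ∀ y, HasDerivAt (deriv F) (deriv (deriv F) y) y := fun y =>
    ((c1.differentiable (by norm_num)) y).hasDerivAt
  have d2 : ∀ y, HasDerivAt (deriv (deriv F)) (deriv (deriv (deriv F)) y) y := fun y =>
    ((c2.differentiable (by norm_num)) y).hasDerivAt
  refine ⟨d0, d1, fun y => ?_⟩
  suffices h : deriv (deriv (deriv F)) y = β * y * phi n (F y) by
    rw [← h]; exact d2 y
  by_contra hne
  have gc : Continuous fun y => β * y * phi n (F y) := by
    have := (phi_cont h1).comp hF.continuous
    simp only [Function.comp_def] at this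
    fun_prop
  have op : IsOpen {y | deriv (deriv (deriv F)) y ≠ β * y * phi n (F y)} :=
    isOpen_ne_fun c3 gc
  have z0 : ∀ z ∈ {y | deriv (deriv (deriv F)) y ≠ β * y * phi n (F y)}, F z = 0 := by
    intro z hz
    by_contra hF0
    apply hz
    have hp : |F z| ^ n ≠ 0 := (Real.rpow_pos_of_pos (abs_pos.mpr hF0) _).ne'
    apply mul_left_cancel₀ hp
    rw [he z]
    have := abs_pow_mul_phi n (F z)
    linear_combination (-(β * z)) * this
  have z3 := deriv_zero_of_ev d2 op (deriv_zero_of_ev d1 op (deriv_zero_of_ev d0 op z0)) y hne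
  apply hne
  rw [z3, z0 y hne, phi_zero, mul_zero]

lemma IsSol.contDiff {n β : ℝ} (h1 : n < 1) {F F1 F2 : ℝ → ℝ} (h : IsSol n β F F1 F2) :
    ContDiff ℝ 3 F ∧ ∀ y : ℝ, |F y| ^ n * deriv (deriv (deriv F)) y = β * y * F y := by
  have e0 : deriv F = F1 := funext fun y => (h.d0 y).deriv
  have e1 : deriv F1 = F2 := funext fun y => (h.d1 y).deriv
  have e2 : deriv F2 = fun y => β * y * phi n (F y) := funext fun y => (h.d2 y).deriv
  have gc : Continuous fun y => β * y * phi n (F y) := by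
    have := (phi_cont h1).comp h.cont
    simp only [Function.comp_def] at this
    fun_prop
  have c2 : ContDiff ℝ 1 F2 :=
    contDiff_one_iff_deriv.mpr ⟨fun y => (h.d2 y).differentiableAt, by rw [e2]; exact gc⟩
  have c1 : ContDiff ℝ 2 F1 := by
    have := (contDiff_succ_iff_deriv (n := 1) (f := F1)).mpr
      ⟨fun y => (h.d1 y).differentiableAt, by simp, by rw [e1]; exact c2⟩
    norm_num at this; exact this
  have c0 : ContDiff ℝ 3 F := by
    have := (contDiff_succ_iff_deriv (n := 2) (f := F)).mpr
      ⟨fun y => (h.d0 y).differentiableAt, by simp, by rw [e0]; exact c1⟩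
    norm_num at this; exact this
  refine ⟨c0, fun y => ?_⟩
  rw [e0, e1, e2]
  have := abs_pow_mul_phi n (F y)
  linear_combination (β * y) * this

/-- Compactly supported solution. -/
def CSol (n β : ℝ) (F : ℝ → ℝ) : Prop :=
  ∃ F1 F2 : ℝ → ℝ, ∃ R : ℝ, IsSol n β F F1 F2 ∧ 0 < R ∧ ∀ y, R < |y| → F y = 0

lemma CSol.zero (n β : ℝ) : CSol n β (fun _ => 0) := by
  refine ⟨fun _ => 0, fun _ => 0, 1, ⟨fun y => hasDerivAt_const _ _, fun y => hasDerivAt_const _ _,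
    fun y => ?_⟩, one_pos, fun _ _ => rfl⟩
  rw [phi_zero, mul_zero]; exact hasDerivAt_const _ _

lemma CSol.neg {n β : ℝ} {F : ℝ → ℝ} (h : CSol n β F) : CSol n β (fun y => - F y) := by
  obtain ⟨F1, F2, R, hF, hR, hz⟩ := h
  refine ⟨fun y => - F1 y, fun y => - F2 y, R, ⟨fun y => (hF.d0 y).neg, fun y => (hF.d1 y).neg,
    fun y => ?_⟩, hR, fun y hy => by simp [hz y hy]⟩
  rw [phi_neg, mul_neg]; exact (hF.d2 y).neg

lemma CSol.scale {n β : ℝ} (h0 : 0 < n) (h1 : n < 1) {F : ℝ → ℝ} (h : CSol n β F) {b : ℝ}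
    (hb : 0 < b) : CSol n β (fun y => b ^ (4 / n) * F (y / b)) := by
  obtain ⟨F1, F2, R, hF, hR, hz⟩ := h
  set c := b ^ (4 / n) with hc
  have c0 : 0 < c := by positivity
  have cn : c ^ n = b ^ 4 := by
    rw [hc, ← Real.rpow_mul hb.le, div_mul_cancel₀ _ h0.ne', ← Real.rpow_natCast]; norm_num
  have c1 : c = c ^ (1 - n) * b ^ 4 := by
    rw [← cn, ← Real.rpow_add c0]; simp
  have dd : ∀ (f f' : ℝ → ℝ), (∀ y, HasDerivAt f (f' y) y) → ∀ k y,
      HasDerivAt (fun y => k * f (y / b)) (k / b * f' (y / b)) y := by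
    intro f f' hf k y
    have := ((hf (y / b)).comp y ((hasDerivAt_id y).div_const b)).const_mul k
    refine this.congr_deriv ?_
    ring
  refine ⟨fun y => c / b * F1 (y / b), fun y => c / b / b * F2 (y / b), b * R,
    ⟨dd F F1 hF.d0 c, dd F1 F2 hF.d1 _, fun y => ?_⟩, by positivity, fun y hy => ?_⟩
  · refine (dd F2 _ hF.d2 (c / b / b) y).congr_deriv ?_
    rw [phi_mul c0.le h1]
    have : c / b / b / b = c ^ (1 - n) * b := by
      field_simp
      linarith [c1]
    rw [this]; field_simp
  · beta_reduce
    rw [hz, mul_zero]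
    rw [abs_div, abs_of_pos hb, lt_div_iff₀ hb]; linarith

lemma integral_restrict {f : ℝ → ℝ} {R : ℝ} (hz : ∀ y, R < |y| → f y = 0) :
    ∫ y in (-(R+1))..(R+1), f y = ∫ y, f y := by
  refine intervalIntegral.integral_eq_integral_of_support_subset (fun y hy => ?_)
  have : |y| ≤ R := by
    by_contra hc; push Not at hc; exact hy (hz y hc)
  have := abs_le.mp this
  exact ⟨by linarith [this.1], by linarith [this.2]⟩

lemma CSol.unique {n β : ℝ} (h1 : n < 1) (hβ : 0 < β) {F G : ℝ → ℝ} (hF : CSol n β F)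
    (hG : CSol n β G) (hm : ∫ y, phi n (F y) = ∫ y, phi n (G y)) : F = G := by
  obtain ⟨F1, F2, R, hF, hR, hz⟩ := hF
  obtain ⟨G1, G2, R', hG, hR', hz'⟩ := hG
  have zF : ∀ y, max R R' < |y| → F y = 0 := fun y hy => hz y ((le_max_left _ _).trans_lt hy)
  have zG : ∀ y, max R R' < |y| → G y = 0 := fun y hy => hz' y ((le_max_right _ _).trans_lt hy)
  refine unique_mass h1 hβ hF hG (hR.le.trans (le_max_left R R')) zF zG ?_
  rw [integral_restrict (f := fun y => phi n (F y)) (fun y hy => by simp only [zF y hy, phi_zero]),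
    integral_restrict (f := fun y => phi n (G y)) (fun y hy => by simp only [zG y hy, phi_zero]), hm]

lemma CSol.mass_ne {n β : ℝ} (h1 : n < 1) (hβ : 0 < β) {F : ℝ → ℝ} (hF : CSol n β F)
    (hm : ∫ y, F y ≠ 0) : ∫ y, phi n (F y) ≠ 0 := by
  intro h
  have := hF.unique h1 hβ (CSol.zero n β) (by simp [h, phi_zero])
  apply hm
  rw [this]; simp

lemma scale_integral {F : ℝ → ℝ} {b c : ℝ} (hb : 0 < b) :
    ∫ y, c * F (y / b) = c * b * ∫ y, F y := by
  rw [integral_const_mul, Measure.integral_comp_div F b, abs_of_pos hb, smul_eq_mul, mul_assoc]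

lemma exists_scale {n β : ℝ} (h0 : 0 < n) (h1 : n < 1) (hβ : 0 < β) {F G : ℝ → ℝ}
    (hF : CSol n β F) (hG : CSol n β G)
    (hp : 0 < (∫ y, phi n (G y)) / ∫ y, phi n (F y)) :
    ∃ b : ℝ, 0 < b ∧ G = fun y => b ^ (4 / n) * F (y / b) := by
  set ρ := (∫ y, phi n (G y)) / ∫ y, phi n (F y) with hρ
  have hMF : ∫ y, phi n (F y) ≠ 0 := by
    intro h; rw [hρ, h, div_zero] at hp; exact lt_irrefl _ hp
  set γ := 4 / n * (1 - n) + 1 with hγ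
  have γ0 : 0 < γ := by
    have : 0 < 1 - n := by linarith
    positivity
  set b := ρ ^ (1 / γ) with hb
  have b0 : 0 < b := by positivity
  refine ⟨b, b0, ?_⟩
  refine hG.unique h1 hβ (hF.scale h0 h1 b0) ?_
  have e : ∀ y, phi n (b ^ (4 / n) * F (y / b)) = (b ^ (4 / n)) ^ (1 - n) * phi n (F (y / b)) :=
    fun y => phi_mul (by positivity) h1
  simp only [e]
  rw [scale_integral (F := fun y => phi n (F y)) b0, ← Real.rpow_mul b0.le,
    ← Real.rpow_add_one b0.ne', ← hγ, hb, ← Real.rpow_mul hp.le, one_div_mul_cancel γ0.ne',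
    Real.rpow_one, hρ, div_mul_cancel₀ _ hMF]

lemma CSol.unique_unit {n β : ℝ} (h0 : 0 < n) (h1 : n < 1) (hβ : 0 < β) {F G : ℝ → ℝ}
    (hF : CSol n β F) (hG : CSol n β G) (mF : ∫ y, F y = 1) (mG : ∫ y, G y = 1) : G = F := by
  have nF := hF.mass_ne h1 hβ (by rw [mF]; norm_num)
  have nG := hG.mass_ne h1 hβ (by rw [mG]; norm_num)
  rcases lt_or_gt_of_ne (div_ne_zero nG nF) with h | h
  · obtain ⟨b, b0, hb⟩ := exists_scale h0 h1 hβ hF.neg hG (by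
      simp only [phi_neg, integral_neg]; rw [div_neg]; linarith)
    rw [hb, scale_integral (F := fun y => - F y) b0, integral_neg, mF] at mG
    have : 0 < b ^ (4 / n) * b := by positivity
    linarith
  · obtain ⟨b, b0, hb⟩ := exists_scale h0 h1 hβ hF hG h
    rw [hb, scale_integral b0, mF, mul_one, ← Real.rpow_add_one b0.ne'] at mG
    have b1 : b = 1 := by
      have hp : 4 / n + 1 ≠ 0 := by positivity
      have := Real.rpow_rpow_inv b0.le hp
      rw [← this, mG, Real.one_rpow]
    rw [hb, b1]; simp

/-- Existence of an even, unit mass solution. -/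
lemma exists_unit {n β : ℝ} (h0 : 0 < n) (h1 : n < 1) (hβ : 0 < β) (hβ1 : β ≤ 1) :
    ∃ F : ℝ → ℝ, CSol n β F ∧ (∀ y, F (-y) = F y) ∧ ∫ y, F y = 1 := by
  obtain ⟨F, F1, F2, R, hF, hR, hz, ev, F10, F0⟩ := exist_global h0 h1 hβ hβ1
  have hC : CSol n β F := ⟨F1, F2, R, hF, hR, hz⟩
  have hL : R < |R + 1| := by rw [abs_of_pos (by linarith)]; linarith
  have hm : ∫ y, F y ≠ 0 := by
    intro hm
    rw [← integral_restrict hz] at hm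
    have e := intervalIntegral.integral_comp_neg (a := 0) (b := R + 1) F
    simp only [ev, neg_zero] at e
    have s := intervalIntegral.integral_add_adjacent_intervals (μ := volume)
      (hF.cont.intervalIntegrable (-(R+1)) 0) (hF.cont.intervalIntegrable 0 (R+1))
    have hz0 := mass_zero h0 h1 hβ hF (L := R + 1) (by linarith) F10 (hz _ hL)
      (hF.zero1 hz _ hL) (by linarith)
    have cl := Set.EqOn.closure (f := F) (g := fun _ => 0) (s := Set.Ioo 0 (R + 1)) hz0 hF.cont
      continuous_const
    rw [closure_Ioo (by linarith)] at cl
    exact F0 (cl ⟨le_rfl, by linarith⟩)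
  obtain ⟨G, hG, Gev, Gm⟩ : ∃ G : ℝ → ℝ, CSol n β G ∧ (∀ y, G (-y) = G y) ∧ 0 < ∫ y, G y := by
    rcases lt_or_gt_of_ne hm with h | h
    · exact ⟨_, hC.neg, fun y => by simp [ev], by rw [integral_neg]; linarith⟩
    · exact ⟨F, hC, ev, h⟩
  set m := ∫ y, G y with hmd
  have γ0 : 4 / n + 1 ≠ 0 := by positivity
  set b := (1 / m) ^ (1 / (4 / n + 1)) with hb
  have b0 : 0 < b := by positivity
  refine ⟨_, hG.scale h0 h1 b0, fun y => by simp only [neg_div, Gev], ?_⟩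
  rw [scale_integral b0, ← hmd, ← Real.rpow_add_one b0.ne', hb, ← Real.rpow_mul (by positivity),
    one_div_mul_cancel γ0, Real.rpow_one, one_div_mul_cancel Gm.ne']

lemma IsSol.den {n β : ℝ} {F F1 F2 : ℝ → ℝ} (h1 : n < 1) (h : IsSol n β F F1 F2) (y : ℝ) :
    HasDerivAt (en F F1 F2) (-(β * y * |F y| ^ (2 - n))) y := by
  have := (((h.d1 y).mul (h.d1 y)).div_const 2).sub ((h.d0 y).mul (h.d2 y))
  refine this.congr_deriv ?_
  rw [← mul_phi h1]
  ring

lemma zero_beyond {n β : ℝ} (h1 : n < 1) (hβ : 0 < β) {F F1 F2 : ℝ → ℝ} {R : ℝ}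
    (h : IsSol n β F F1 F2) (hz : ∀ y, R < |y| → F y = 0) {y : ℝ}
    (hy : 0 ≤ y) (hev : F =ᶠ[nhds y] 0) : ∀ z, y < z → F z = 0 := by
  intro z hyz
  obtain ⟨s, hs, so, ys⟩ := mem_nhds_iff.mp hev
  have f0 := hs ys
  have f1 := deriv_zero_of_ev h.d0 so (fun x hx => hs hx)
  have f2 := deriv_zero_of_ev h.d1 so f1
  have eny : en F F1 F2 y = 0 := by
    simp only [en, f1 y ys, f2 y ys]; ring
  set L := max (z + 1) (R + 1) with hL
  have L1 : z + 1 ≤ L := le_max_left _ _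
  have L2 : R < |L| := lt_of_lt_of_le (by linarith [le_max_right (z + 1) (R + 1)]) (le_abs_self L)
  have enL : en F F1 F2 L = 0 := by
    simp only [en, hz L L2, h.zero1 hz L L2]; ring
  have := deriv_zero_of_ends (f := fun x => - en F F1 F2 x) (f' := fun x => - -(β * x * |F x| ^ (2 - n)))
    (a := y) (b := L)
    (fun x _ => (h.den h1 x).neg) (fun x hx => ?_) (by simp [eny, enL]) z ⟨hyz, by linarith⟩
  · have zp : 0 < z := by linarith
    have hb : β * z ≠ 0 := by positivity
    rw [neg_neg] at this
    have := (mul_eq_zero.mp this).resolve_left hb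
    exact abs_eq_zero.mp ((Real.rpow_eq_zero (abs_nonneg _) (by linarith)).mp this)
  · rw [neg_neg]
    have : 0 ≤ x := hy.trans hx.1
    have : 0 ≤ |F x| ^ (2 - n) := Real.rpow_nonneg (abs_nonneg _) _
    positivity

lemma CSol.tsupport_eq {n β : ℝ} (h1 : n < 1) (hβ : 0 < β) {F : ℝ → ℝ} (hF : CSol n β F)
    (ev : ∀ y, F (-y) = F y) (hne : F ≠ 0) :
    HasCompactSupport F ∧ ∃ y₀ : ℝ, 0 < y₀ ∧ tsupport F = Set.Icc (-y₀) y₀ := by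
  obtain ⟨F1, F2, R, hF, hR, hz⟩ := hF
  have hc : HasCompactSupport F := by
    refine HasCompactSupport.intro (K := Set.Icc (-R) R) isCompact_Icc (fun x hx => hz x ?_)
    by_contra hcon; push Not at hcon
    exact hx (abs_le.mp hcon)
  refine ⟨hc, ?_⟩
  obtain ⟨x0, hx0⟩ := Function.ne_iff.mp hne
  obtain ⟨y₀, hy₀, hmax⟩ := hc.isCompact.exists_isGreatest ⟨x0, subset_tsupport F hx0⟩
  have sub : ∀ x, F x ≠ 0 → x ∈ Set.Icc (-y₀) y₀ := fun x hx =>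
    ⟨by have := hmax (subset_tsupport F (show F (-x) ≠ 0 by rwa [ev])); linarith,
      hmax (subset_tsupport F hx)⟩
  have y0pos : 0 < y₀ := by
    by_contra hcon
    push Not at hcon
    have zr : Set.EqOn F (fun _ => 0) (Set.Ioi 0) := by
      intro x hx
      by_contra h
      have := (sub x h).2
      have : 0 < x := hx
      linarith
    have cl := zr.closure hF.cont continuous_const
    rw [closure_Ioi] at cl
    apply hx0
    rcases le_total 0 x0 with h | h
    · exact cl h
    · rw [← ev]; exact cl (show (0:ℝ) ≤ -x0 by linarith)
  have key : ∀ y, 0 ≤ y → F =ᶠ[nhds y] 0 → y₀ < y := by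
    intro y hy he
    have zb := zero_beyond h1 hβ hF hz hy he
    have : tsupport F ⊆ Set.Iic y := by
      refine closure_minimal (fun x hx => ?_) isClosed_Iic
      by_contra hcon
      simp only [Set.mem_Iic, not_le] at hcon
      exact hx (zb x hcon)
    refine lt_of_le_of_ne (this hy₀) ?_
    rintro rfl
    exact (notMem_tsupport_iff_eventuallyEq.mpr he) hy₀
  refine ⟨y₀, y0pos, Set.Subset.antisymm (closure_minimal sub isClosed_Icc) (fun y hy => ?_)⟩
  by_contra hcon
  have he := notMem_tsupport_iff_eventuallyEq.mp hcon
  rcases le_total 0 y with h | h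
  · have := key y h he
    linarith [hy.2]
  · have he' : F =ᶠ[nhds (-y)] 0 := by
      have t : Filter.Tendsto (fun x : ℝ => -x) (nhds (-y)) (nhds y) := by
        have := (continuous_neg (G := ℝ)).tendsto (-y)
        rwa [neg_neg] at this
      filter_upwards [t.eventually he] with x hx
      rw [← ev]; exact hx
    have := key (-y) (by linarith) he'
    linarith [hy.1]

lemma CSol.exists_neg {n β : ℝ} (hβ : 0 < β) {F : ℝ → ℝ} (hF : CSol n β F)
    (ev : ∀ y, F (-y) = F y) (hne : F ≠ 0) : ∃ y, F y < 0 := by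
  by_contra hcon
  push Not at hcon
  obtain ⟨F1, F2, R, hF, hR, hz⟩ := hF
  have hp : ∀ y, 0 ≤ y → F y = 0 := by
    intro y hy
    set L := max y (R + 1) with hL
    have yL : y ≤ L := le_max_left _ _
    have L2 : R < |L| := lt_of_lt_of_le (by linarith [le_max_right y (R + 1)]) (le_abs_self L)
    have mL : L ∈ Set.Icc 0 L := ⟨by linarith, le_rfl⟩
    have m2 : ∀ x ∈ Set.Icc 0 L, F2 x ≤ 0 := fun x hx => by
      have := mono_of_deriv (a := 0) (b := L) (fun x _ => hF.d2 x)
        (fun x hx => mul_nonneg (mul_nonneg hβ.le hx.1) (phi_nonneg (hcon x))) hx mL hx.2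
      rwa [hF.zero2 hz L L2] at this
    have m1 : ∀ x ∈ Set.Icc 0 L, 0 ≤ F1 x := fun x hx => by
      have := anti_of_deriv (a := 0) (b := L) (fun x _ => hF.d1 x) m2 hx mL hx.2
      rwa [hF.zero1 hz L L2] at this
    have := mono_of_deriv (a := 0) (b := L) (fun x _ => hF.d0 x) m1 (⟨hy, yL⟩ : y ∈ Set.Icc 0 L) mL yL
    rw [hz L L2] at this
    exact le_antisymm this (hcon y)
  apply hne
  funext y
  rcases le_total 0 y with h | h
  · exact hp y h
  · rw [← ev]; exact hp _ (by linarith)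

lemma csol_of {n β : ℝ} (h1 : n < 1) {F : ℝ → ℝ} (hF : ContDiff ℝ 3 F) (hc : HasCompactSupport F)
    (he : ∀ y : ℝ, |F y| ^ n * deriv (deriv (deriv F)) y = β * y * F y) : CSol n β F := by
  obtain ⟨R, hR, hsub⟩ := hc.isCompact.isBounded.subset_closedBall_lt 0 0
  refine ⟨_, _, R, IsSol.of_contDiff h1 hF he, hR, fun y hy => ?_⟩
  by_contra hne
  have := hsub (subset_tsupport F hne)
  rw [Metric.mem_closedBall, Real.dist_eq, sub_zero] at this
  linarith

end CPS

/-- Existence and uniqueness of the sign-changing source-type similarity profile of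
the Cauchy problem for the thin film equation (`N = 1`, `n ∈ (0,1)`,
`β = 1/(4+n)`): there is exactly one compactly supported `C³` solution of
`|F|^n F''' = β y F` of unit mass; it is even, its support is a bounded symmetric
interval, and it changes sign. -/
theorem CP_similarity_profile_exists_unique
    (n : ℝ) (hn : n ∈ Set.Ioo (0 : ℝ) 1) (β : ℝ) (hβ : β = 1 / (4 + n)) :
    ∃ F : ℝ → ℝ,
      (ContDiff ℝ 3 F ∧ HasCompactSupport F ∧
        (∀ y : ℝ, |F y| ^ n * deriv (deriv (deriv F)) y = β * y * F y) ∧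
        (∫ y : ℝ, F y) = 1) ∧
      (∀ G : ℝ → ℝ,
        (ContDiff ℝ 3 G ∧ HasCompactSupport G ∧
          (∀ y : ℝ, |G y| ^ n * deriv (deriv (deriv G)) y = β * y * G y) ∧
          (∫ y : ℝ, G y) = 1) → G = F) ∧
      (∀ y : ℝ, F (-y) = F y) ∧
      (∃ y₀ : ℝ, 0 < y₀ ∧ tsupport F = Set.Icc (-y₀) y₀) ∧
      (∃ y₁ : ℝ, 0 < F y₁) ∧ (∃ y₂ : ℝ, F y₂ < 0) := by
  obtain ⟨h0, h1⟩ := hn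
  have hβ0 : 0 < β := by rw [hβ]; positivity
  have hβ1 : β ≤ 1 := by
    rw [hβ, div_le_one (by linarith)]; linarith
  obtain ⟨F, hC, ev, hm⟩ := CPS.exists_unit h0 h1 hβ0 hβ1
  have hne : F ≠ 0 := by
    rintro rfl
    simp at hm
  obtain ⟨hc, hsupp⟩ := hC.tsupport_eq h1 hβ0 ev hne
  obtain ⟨cd, heq⟩ : ContDiff ℝ 3 F ∧
      ∀ y : ℝ, |F y| ^ n * deriv (deriv (deriv F)) y = β * y * F y := by
    obtain ⟨F1, F2, R, hF, _, _⟩ := hC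
    exact hF.contDiff h1
  refine ⟨F, ⟨cd, hc, heq, hm⟩, ?_, ev, hsupp, ?_, hC.exists_neg hβ0 ev hne⟩
  · rintro G ⟨g1, g2, g3, g4⟩
    exact hC.unique_unit h0 h1 hβ0 (CPS.csol_of h1 g1 g2 g3) hm g4
  · by_contra hcon
    push Not at hcon
    have := integral_nonpos (μ := volume) hcon
    linarith
end

section
/- Let N ≥ 1, c₀ = 1/(8(N+2)(N+4)), p = 2 + 4/N, and on the unit ball B₁ ⊂ ℝ^N set F(ζ) = c₀(1 − ‖ζ‖²)², ψ₀(ζ) = b₀(‖ζ‖² − 1) with b₀ = −√((N+2)/(2ω_N)) (ω_N the volume of B₁), and ρ(ζ) = (1 − ‖ζ‖²)^{−1}. Then γ₁ := −∫_{B₁} ((1/4) ζ·∇F(ζ) − F(ζ)) ψ₀(ζ) ρ(ζ) dζ > 0 and γ₂ := ∫_{B₁} F(ζ)^p ψ₀(ζ) ρ(ζ) dζ > 0. -/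
open MeasureTheory
open scoped RealInnerProductSpace

lemma ball_integral_pos_aux {N : ℕ} (g : EuclideanSpace ℝ (Fin N) → ℝ) (hg : Continuous g)
    (hpos : ∀ ζ ∈ Metric.ball (0 : EuclideanSpace ℝ (Fin N)) 1, 0 < g ζ) :
    0 < ∫ ζ in Metric.ball (0 : EuclideanSpace ℝ (Fin N)) 1, g ζ := by
  have hint : IntegrableOn g (Metric.ball (0 : EuclideanSpace ℝ (Fin N)) 1) :=
    (hg.continuousOn.integrableOn_compact (isCompact_closedBall _ _)).mono_set
      Metric.ball_subset_closedBall
  rw [setIntegral_pos_iff_support_of_nonneg_ae _ hint]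
  · have : Function.support g ∩ Metric.ball (0 : EuclideanSpace ℝ (Fin N)) 1
        = Metric.ball (0 : EuclideanSpace ℝ (Fin N)) 1 := by
      apply Set.inter_eq_right.2
      intro x hx
      exact (hpos x hx).ne'
    rw [this]
    exact Metric.measure_ball_pos _ _ one_pos
  · rw [Filter.EventuallyLE, ae_restrict_iff' measurableSet_ball]
    exact Filter.Eventually.of_forall fun x hx => (hpos x hx).le

lemma inner_gradient_aux {N : ℕ} (c : ℝ) (ζ : EuclideanSpace ℝ (Fin N)) :
    ⟪ζ, gradient (fun ζ : EuclideanSpace ℝ (Fin N) => c * (1 - ‖ζ‖ ^ 2) ^ 2) ζ⟫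
      = -4 * c * ‖ζ‖ ^ 2 * (1 - ‖ζ‖ ^ 2) := by
  have h := ((((hasStrictFDerivAt_norm_sq ζ).hasFDerivAt).const_sub 1).pow 2).const_mul c
  rw [real_inner_comm, gradient, InnerProductSpace.toDual_symm_apply, h.fderiv]
  simp
  ring

/-- Positivity of the two projection coefficients `γ₁, γ₂` driving the
centre-subspace dynamics of the thin film equation with critical absorption
(`n = 1`, `p = p₀ = 2 + 4/N`). -/
theorem projection_coefficients_positive
    (N : ℕ) (hN : 1 ≤ N) (c₀ p ωN b₀ : ℝ)
    (hc₀ : c₀ = 1 / (8 * (N + 2) * (N + 4))) (hp : p = 2 + 4 / N)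
    (hω : ωN = (volume (Metric.ball (0 : EuclideanSpace ℝ (Fin N)) 1)).toReal)
    (hb₀ : b₀ = -Real.sqrt ((N + 2) / (2 * ωN)))
    (F ψ₀ ρ : EuclideanSpace ℝ (Fin N) → ℝ)
    (hF : ∀ ζ, F ζ = c₀ * (1 - ‖ζ‖ ^ 2) ^ 2)
    (hψ₀ : ∀ ζ, ψ₀ ζ = b₀ * (‖ζ‖ ^ 2 - 1))
    (hρ : ∀ ζ, ρ ζ = (1 - ‖ζ‖ ^ 2)⁻¹) :
    0 < -(∫ ζ in Metric.ball (0 : EuclideanSpace ℝ (Fin N)) 1,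
          ((1 / 4) * ⟪ζ, gradient F ζ⟫ - F ζ) * ψ₀ ζ * ρ ζ) ∧
    0 < ∫ ζ in Metric.ball (0 : EuclideanSpace ℝ (Fin N)) 1,
          F ζ ^ p * ψ₀ ζ * ρ ζ := by
  have hc : 0 < c₀ := by rw [hc₀]; positivity
  have hω0 : 0 < ωN := by
    rw [hω]
    exact ENNReal.toReal_pos (Metric.measure_ball_pos _ _ one_pos).ne' measure_ball_lt_top.ne
  have hb : 0 < -b₀ := by
    rw [hb₀, neg_neg]
    exact Real.sqrt_pos.2 (by positivity)
  have hp0 : 0 ≤ p := by rw [hp]; positivity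
  have hr : ∀ ζ ∈ Metric.ball (0 : EuclideanSpace ℝ (Fin N)) 1, 0 < 1 - ‖ζ‖ ^ 2 := by
    intro ζ hζ
    have h1 : ‖ζ‖ < 1 := by simpa using hζ
    nlinarith [norm_nonneg ζ]
  have hFe : F = fun ζ => c₀ * (1 - ‖ζ‖ ^ 2) ^ 2 := funext hF
  constructor
  · rw [← integral_neg]
    rw [setIntegral_congr_fun (g := fun ζ => c₀ * (1 - ‖ζ‖ ^ 2) * (-b₀)) measurableSet_ball]
    · refine ball_integral_pos_aux _ (by fun_prop) fun ζ hζ => ?_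
      have := hr ζ hζ
      positivity
    · intro ζ hζ
      have := (hr ζ hζ).ne'
      simp only [hψ₀, hρ]
      rw [hFe, inner_gradient_aux]
      field_simp
      ring
  · rw [setIntegral_congr_fun (g := fun ζ => (c₀ * (1 - ‖ζ‖ ^ 2) ^ 2) ^ p * (-b₀))
      measurableSet_ball]
    · refine ball_integral_pos_aux _ ?_ fun ζ hζ => ?_
      · exact (Continuous.rpow_const (by fun_prop) fun _ => Or.inr hp0).mul continuous_const
      · have := hr ζ hζ
        positivity
    · intro ζ hζ
      have := (hr ζ hζ).ne'
      simp only [hψ₀, hρ, hF]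
      rw [mul_assoc]
      congr 1
      field_simp
      ring
end

section
/- Let N ≥ 1. For every C⁴ function Y : ℝ^N → ℝ and every ζ ∈ ℝ^N one has div((1 − ‖·‖²)² ∇(ΔY))(ζ) = (1 − ‖ζ‖²) [ Δ((1 − ‖·‖²) ΔY)(ζ) + 2N ΔY(ζ) ]. Consequently, with F(ζ) = c₀(1 − ‖ζ‖²)² and ρ(ζ) = (1 − ‖ζ‖²)^{−1}, the linearised thin-film operator A'(F)Y = −div(F ∇ΔY) satisfies ρ·A'(F)Y = −c₀[Δ(aΔY) + 2N ΔY] with a(ζ) = 1 − ‖ζ‖², a formally self-adjoint (divergence-squared) form. -/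
/-- The Laplacian of a scalar function on `ℝ^N`. -/
noncomputable def lap {N : ℕ} (f : EuclideanSpace ℝ (Fin N) → ℝ)
    (x : EuclideanSpace ℝ (Fin N)) : ℝ :=
  ∑ i : Fin N, fderiv ℝ (fun y => fderiv ℝ f y (EuclideanSpace.single i 1)) x
    (EuclideanSpace.single i 1)

/-- The divergence of a vector field on `ℝ^N`. -/
noncomputable def diverg {N : ℕ}
    (V : EuclideanSpace ℝ (Fin N) → EuclideanSpace ℝ (Fin N))
    (x : EuclideanSpace ℝ (Fin N)) : ℝ :=
  ∑ i : Fin N, fderiv ℝ (fun y => V y i) x (EuclideanSpace.single i 1)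

theorem hasFDerivAt_a {N : ℕ} (z : EuclideanSpace ℝ (Fin N)) :
    HasFDerivAt (fun z : EuclideanSpace ℝ (Fin N) => 1 - ‖z‖ ^ 2) (-(2 • innerSL ℝ z)) z := by
  have h := (hasStrictFDerivAt_norm_sq z).hasFDerivAt
  exact h.const_sub 1

theorem contDiff_partial {N : ℕ} {f : EuclideanSpace ℝ (Fin N) → ℝ} {m n : WithTop ℕ∞}
    (hf : ContDiff ℝ n f) (hmn : m + 1 ≤ n) (v : EuclideanSpace ℝ (Fin N)) :
    ContDiff ℝ m (fun y => fderiv ℝ f y v) :=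
  (hf.fderiv_right hmn).clm_apply contDiff_const

theorem contDiff_lap {N : ℕ} {Y : EuclideanSpace ℝ (Fin N) → ℝ}
    (hY : ContDiff ℝ 4 Y) : ContDiff ℝ 2 (lap Y) := by
  unfold lap
  refine ContDiff.sum fun i _ => ?_
  have h3 : ContDiff ℝ 3 (fun y => fderiv ℝ Y y (EuclideanSpace.single i 1)) :=
    contDiff_partial hY (by norm_num) _
  exact contDiff_partial h3 (by norm_num) _

theorem gradient_coord {N : ℕ} (u : EuclideanSpace ℝ (Fin N) → ℝ)
    (z : EuclideanSpace ℝ (Fin N)) (i : Fin N) :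
    gradient u z i = fderiv ℝ u z (EuclideanSpace.single i 1) := by
  have h : inner ℝ (gradient u z) (EuclideanSpace.single i (1 : ℝ))
      = fderiv ℝ u z (EuclideanSpace.single i 1) := by
    simp only [gradient, InnerProductSpace.toDual_symm_apply]
  rw [← h, EuclideanSpace.inner_single_right]
  simp

/-- The symmetric (divergence-squared) form of the linearised thin-film operator:
`div((1-‖·‖²)² ∇ΔY)(ζ) = (1-‖ζ‖²)[Δ((1-‖·‖²)ΔY)(ζ) + 2N ΔY(ζ)]` for every `C⁴`
function `Y` on `ℝ^N`. -/
theorem linearised_TFE_symmetric_form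
    (N : ℕ) (hN : 1 ≤ N) (Y : EuclideanSpace ℝ (Fin N) → ℝ)
    (hY : ContDiff ℝ 4 Y) (ζ : EuclideanSpace ℝ (Fin N)) :
    diverg (fun z => ((1 - ‖z‖ ^ 2) ^ 2) • gradient (lap Y) z) ζ
      = (1 - ‖ζ‖ ^ 2) *
        (lap (fun z => (1 - ‖z‖ ^ 2) * lap Y z) ζ + 2 * N * lap Y ζ) := by
  have hu : ContDiff ℝ 2 (lap Y) := contDiff_lap hY
  generalize lap Y = u at hu
  have hud : Differentiable ℝ u := hu.differentiable (by norm_num)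
  have hpd : ∀ i : Fin N, Differentiable ℝ
      (fun y => fderiv ℝ u y (EuclideanSpace.single i 1)) := fun i =>
    (contDiff_partial (m := 1) hu (by norm_num) _).differentiable (by norm_num)
  have hL : ∀ i : Fin N, fderiv ℝ
      (fun y => (((1 - ‖y‖ ^ 2) ^ 2) • gradient u y) i) ζ (EuclideanSpace.single i 1)
      = (1 - ‖ζ‖ ^ 2) ^ 2 * fderiv ℝ (fun y => fderiv ℝ u y (EuclideanSpace.single i 1)) ζ
          (EuclideanSpace.single i 1)
        - 4 * (1 - ‖ζ‖ ^ 2) * ζ i * fderiv ℝ u ζ (EuclideanSpace.single i 1) := by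
    intro i
    have e : (fun y => (((1 - ‖y‖ ^ 2) ^ 2) • gradient u y) i)
        = fun y => ((1 - ‖y‖ ^ 2) * (1 - ‖y‖ ^ 2)) *
          fderiv ℝ u y (EuclideanSpace.single i 1) := by
      funext y
      simp [gradient_coord, sq]
    rw [e, ((((hasFDerivAt_a ζ).fun_mul (hasFDerivAt_a ζ))).fun_mul (hpd i ζ).hasFDerivAt).fderiv]
    simp [EuclideanSpace.inner_single_right]
    ring
  have hR1 : ∀ i : Fin N, (fun y => fderiv ℝ (fun z => (1 - ‖z‖ ^ 2) * u z) y
      (EuclideanSpace.single i 1))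
      = fun y => (1 - ‖y‖ ^ 2) * fderiv ℝ u y (EuclideanSpace.single i 1)
        - 2 * (EuclideanSpace.proj (𝕜 := ℝ) i y * u y) := by
    intro i
    funext y
    rw [((hasFDerivAt_a y).fun_mul (hud y).hasFDerivAt).fderiv]
    simp [EuclideanSpace.inner_single_right]
    ring
  have hR : ∀ i : Fin N, fderiv ℝ (fun y => fderiv ℝ (fun z => (1 - ‖z‖ ^ 2) * u z) y
      (EuclideanSpace.single i 1)) ζ (EuclideanSpace.single i 1)
      = (1 - ‖ζ‖ ^ 2) * fderiv ℝ (fun y => fderiv ℝ u y (EuclideanSpace.single i 1)) ζ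
          (EuclideanSpace.single i 1)
        - 4 * ζ i * fderiv ℝ u ζ (EuclideanSpace.single i 1) - 2 * u ζ := by
    intro i
    rw [hR1 i, (((hasFDerivAt_a ζ).fun_mul (hpd i ζ).hasFDerivAt).fun_sub
      (((EuclideanSpace.proj (𝕜 := ℝ) i : EuclideanSpace ℝ (Fin N) →L[ℝ] ℝ).hasFDerivAt.fun_mul
        (hud ζ).hasFDerivAt).const_mul 2)).fderiv]
    simp [EuclideanSpace.inner_single_right]
    ring
  unfold diverg
  rw [show lap (fun z => (1 - ‖z‖ ^ 2) * u z) ζ = _ from rfl]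
  unfold lap
  rw [Finset.sum_congr rfl fun i _ => hL i, Finset.sum_congr rfl fun i _ => hR i]
  have hc : (2 * N * u ζ : ℝ) = ∑ i : Fin N, 2 * u ζ := by
    simp
    ring
  rw [hc, ← Finset.sum_add_distrib, Finset.mul_sum]
  exact Finset.sum_congr rfl fun i _ => by ring
end
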